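/- arXiv:2008.10016 — 7 statements merged into one kernel-verified Lean document; each statement's English description precedes it below -/
import Mathlib

section
/- Let P ⊆ S^d be a simple polybox code and let C_P ⊆ S^d be a polybox code which covers P, i.e. P ⊑ C_P. Then one can pass from C_P by gluing and cutting to a polybox code C̄_P covering P such that for every p ∈ P the set C̄_p = {w ∈ C̄_P : w is not dichotomous to p} (the minimal cover of p inside C̄_P) contains no twin pair. -/
/- Common framework: polybox codes over a finite alphabet `S` with a
complementation `c : S → S` (an involution without fixed points). -/

namespace PolyboxPaper

variable {S : Type} [Fintype S] [DecidableEq S] {d : ℕ}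

/-- Two words are dichotomous: they differ by complementation at some position. -/
def Dich (c : S → S) (v w : Fin d → S) : Prop := ∃ i, v i = c (w i)

instance (c : S → S) (v w : Fin d → S) : Decidable (Dich c v w) :=
  decidable_of_iff (∃ i, v i = c (w i)) Iff.rfl

/-- A polybox code: every two distinct words are dichotomous. -/
def IsCode (c : S → S) (V : Finset (Fin d → S)) : Prop :=
  ∀ v ∈ V, ∀ w ∈ V, v ≠ w → Dich c v w

/-- A cube tiling code: a polybox code with `2 ^ d` words. -/
def CubeTiling (c : S → S) (V : Finset (Fin d → S)) : Prop :=
  IsCode c V ∧ V.card = 2 ^ d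

/-- `v` and `w` form a twin pair in the `i`-th direction. -/
def TwinPair (c : S → S) (v w : Fin d → S) (i : Fin d) : Prop :=
  v i = c (w i) ∧ ∀ j, j ≠ i → v j = w j

/-- A code is twin pair free if no two of its words form a twin pair. -/
def TwinPairFree (c : S → S) (V : Finset (Fin d → S)) : Prop :=
  ∀ v ∈ V, ∀ w ∈ V, ∀ i, ¬ TwinPair c v w i

/-- A single glue-and-cut operation: a twin pair `v, w` of `V` in the `i`-th
direction is replaced by a twin pair `q, t` in the `i`-th direction agreeing
with `v` (and `w`) at all positions `j ≠ i`. -/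
def GCStep (c : S → S) (V W : Finset (Fin d → S)) : Prop :=
  ∃ (v w q t : Fin d → S) (i : Fin d), v ∈ V ∧ w ∈ V ∧ TwinPair c v w i ∧
    TwinPair c q t i ∧ (∀ j, j ≠ i → q j = v j) ∧ W = (V \ {v, w}) ∪ {q, t}

/-- `W` is obtained from `V` by gluing and cutting (finite, possibly empty,
sequence of single glue-and-cut operations); equivalently, `V` and `W` are
strongly equivalent. -/
def GC (c : S → S) (V W : Finset (Fin d → S)) : Prop :=
  Relation.ReflTransGen (GCStep c) V W

/-- Passing from `V` to `W` by gluing and cutting keeping `Q` fixed: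
every intermediate code contains `Q`. -/
def GCFix (c : S → S) (Q V W : Finset (Fin d → S)) : Prop :=
  Relation.ReflTransGen (fun A B => GCStep c A B ∧ Q ⊆ B) V W

/-- A realization: for each coordinate a map `f i : S → Set (X i)` taking
nonempty proper values and sending complementary letters to complementary sets. -/
def IsRealization (c : S → S) (X : Fin d → Type) (f : ∀ i, S → Set (X i)) : Prop :=
  ∀ i s, (f i s).Nonempty ∧ f i s ≠ Set.univ ∧ f i (c s) = (f i s)ᶜ

/-- The box associated to a word by a realization. -/
def box {X : Fin d → Type} (f : ∀ i, S → Set (X i)) (v : Fin d → S) :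
    Set (∀ i, X i) :=
  {x | ∀ i, x i ∈ f i (v i)}

/-- The word `w` is covered by the code `V` (`w ⊑ V`). -/
def CoveredWord (c : S → S) (w : Fin d → S) (V : Finset (Fin d → S)) : Prop :=
  ∀ (X : Fin d → Type) (f : ∀ i, S → Set (X i)), IsRealization c X f →
    box f w ⊆ ⋃ v ∈ V, box f v

/-- `V ⊑ W`: every word of `V` is covered by `W`. -/
def Covered (c : S → S) (V W : Finset (Fin d → S)) : Prop :=
  ∀ v ∈ V, CoveredWord c v W

/-- Equivalent codes: `V ⊑ W` and `W ⊑ V`. -/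
def Equivalent (c : S → S) (V W : Finset (Fin d → S)) : Prop :=
  Covered c V W ∧ Covered c W V

/-- `V ⊑̇ W`: `V ⊑ W` and no word of `V` belongs to any code obtained from `W`
by gluing and cutting. -/
def DotCovered (c : S → S) (V W : Finset (Fin d → S)) : Prop :=
  Covered c V W ∧ ∀ v ∈ V, ∀ W', GC c W W' → v ∉ W'

/-- The density `δ(V, W)`. -/
noncomputable def delta (c : S → S) (V W : Finset (Fin d → S)) : ℕ∞ :=
  W.inf fun w => ((V.filter fun v => ¬ Dich c v w).card : ℕ∞)

/-- `C` is a minimal cover of the word `w`. -/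
def MinCoverWord (c : S → S) (C : Finset (Fin d → S)) (w : Fin d → S) : Prop :=
  IsCode c C ∧ CoveredWord c w C ∧ ∀ q ∈ C, ¬ Dich c q w

/-- `C` is a minimal cover of the code `P`. -/
def MinCoverCode (c : S → S) (C P : Finset (Fin d → S)) : Prop :=
  IsCode c C ∧ Covered c P C ∧ ∀ q ∈ C, ∃ p ∈ P, ¬ Dich c q p

/-- A simple polybox code. -/
def SimpleCode (c : S → S) (V : Finset (Fin d → S)) : Prop :=
  ∀ i : Fin d, ∃ s : S, ∀ v ∈ V, v i = s ∨ v i = c s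

/-- A simple cube tiling code `{s₁, s₁'} × ⋯ × {s_d, s_d'}`. -/
def SimpleCubeTiling (c : S → S) (U : Finset (Fin d → S)) : Prop :=
  ∃ s : Fin d → S, ∀ v : Fin d → S, v ∈ U ↔ ∀ i, v i = s i ∨ v i = c (s i)

/-- Word whose first four coordinates are `x0 x1 x2 x3` and which agrees with
`r` elsewhere. -/
def specialWord (r : Fin d → S) (x0 x1 x2 x3 : S) : Fin d → S := fun i =>
  if (i : ℕ) = 0 then x0 else if (i : ℕ) = 1 then x1 else if (i : ℕ) = 2 then x2
  else if (i : ℕ) = 3 then x3 else r i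

/-- The special pair of 12-word codes (Theorem 1 of the paper). -/
def SpecialPair (c : S → S) (V W : Finset (Fin d → S)) : Prop :=
  ∃ (a b : S) (r : Fin d → S), a ≠ b ∧ a ≠ c b ∧
    V = {specialWord r a (c a) b (c b), specialWord r a b (c b) a,
         specialWord r a (c b) (c b) (c b), specialWord r (c a) a (c b) (c b),
         specialWord r (c a) (c a) a (c b), specialWord r (c a) b (c b) b,
         specialWord r b a b (c b), specialWord r b b b b,
         specialWord r b (c b) (c a) b, specialWord r (c b) a b (c a),
         specialWord r (c b) (c a) b b, specialWord r (c b) (c b) (c b) b} ∧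
    W = {specialWord r (c a) (c a) (c a) b, specialWord r (c a) b a (c a),
         specialWord r b a (c a) a, specialWord r a (c a) (c a) a,
         specialWord r (c a) a (c a) (c a), specialWord r a b b (c a),
         specialWord r b b a a, specialWord r a (c b) (c a) (c a),
         specialWord r (c b) a (c b) a, specialWord r (c b) (c a) a a,
         specialWord r (c b) (c b) a (c a), specialWord r b (c b) a (c b)}

/-- An isomorphism of `S^d`: a permutation of coordinates followed by
position bijections commuting with complementation. -/
def IsIso (c : S → S) (Φ : (Fin d → S) → Fin d → S) : Prop :=
  ∃ (σ : Equiv.Perm (Fin d)) (h : Fin d → S → S),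
    (∀ i, Function.Bijective (h i)) ∧ (∀ i s, h i (c s) = c (h i s)) ∧
    ∀ v i, Φ v i = h i (v (σ i))

/-- The pair `(V, W)` is, up to isomorphism, the special pair. -/
def SpecialPairUpToIso (c : S → S) (V W : Finset (Fin d → S)) : Prop :=
  ∃ Φ, IsIso c Φ ∧
    (SpecialPair c (V.image Φ) (W.image Φ) ∨ SpecialPair c (W.image Φ) (V.image Φ))


/-- Number of positions at which `v` uses a letter outside `{s i, c (s i)}`. -/
def badCount (c : S → S) (s v : Fin d → S) : ℕ :=
  (Finset.univ.filter fun j => v j ≠ s j ∧ v j ≠ c (s j)).card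

theorem badCount_lt (c : S → S) (s q u : Fin d → S) (i : Fin d)
    (hq : q i = s i ∨ q i = c (s i)) (hu : u i ≠ s i ∧ u i ≠ c (s i))
    (h : ∀ j, j ≠ i → q j = u j) : badCount c s q < badCount c s u := by
  unfold badCount
  apply Finset.card_lt_card
  rw [Finset.ssubset_iff_of_subset]
  · exact ⟨i, by simp [hu.1, hu.2], by
      simp only [Finset.mem_filter, Finset.mem_univ, true_and]
      tauto⟩
  · intro j hj
    simp only [Finset.mem_filter, Finset.mem_univ, true_and] at hj ⊢
    by_cases hji : j = i
    · subst hji; tauto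
    · rw [← h j hji]; exact hj

theorem covered_step (c : S → S) (p : Fin d → S) (C : Finset (Fin d → S))
    (u w q t : Fin d → S) (i : Fin d)
    (huq : ∀ j, j ≠ i → q j = u j) (hwq : ∀ j, j ≠ i → q j = w j)
    (hqt : TwinPair c q t i) (hc : ∀ s, c (c s) = s)
    (h : CoveredWord c p C) : CoveredWord c p ((C \ {u, w}) ∪ {q, t}) := by
  intro X f hf x hx
  have h1 := h X f hf hx
  simp only [Set.mem_iUnion, exists_prop] at h1 ⊢
  obtain ⟨v, hv, hxv⟩ := h1
  by_cases hvu : v = u ∨ v = w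
  · have hv' : ∀ j, j ≠ i → q j = v j := by
      rcases hvu with rfl | rfl <;> assumption
    by_cases hxi : x i ∈ f i (q i)
    · refine ⟨q, by simp, fun j => ?_⟩
      by_cases hji : j = i
      · subst hji; exact hxi
      · rw [hv' j hji]; exact hxv j
    · refine ⟨t, by simp, fun j => ?_⟩
      by_cases hji : j = i
      · subst hji
        have : t j = c (q j) := by rw [hqt.1, hc]
        rw [this, (hf j (q j)).2.2]; exact hxi
      · rw [← hqt.2 j hji, hv' j hji]; exact hxv j
  · refine ⟨v, ?_, hxv⟩
    push Not at hvu
    simp [hv, hvu.1, hvu.2]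

theorem aux (c : S → S) (hc : ∀ s, c (c s) = s) (hc' : ∀ s, c s ≠ s)
    (P : Finset (Fin d → S)) (s : Fin d → S)
    (hs : ∀ i, ∀ v ∈ P, v i = s i ∨ v i = c (s i)) (n : ℕ) :
    ∀ C : Finset (Fin d → S), ∑ v ∈ C, badCount c s v = n → Covered c P C →
    ∃ C' : Finset (Fin d → S), GC c C C' ∧ Covered c P C' ∧
      ∀ p ∈ P, ∀ u ∈ C', ∀ w ∈ C',
        ¬ Dich c u p → ¬ Dich c w p → ∀ i, ¬ TwinPair c u w i := by
  induction n using Nat.strong_induction_on with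
  | _ n ih =>
  intro C hn hcov
  by_cases hgood : ∀ p ∈ P, ∀ u ∈ C, ∀ w ∈ C,
        ¬ Dich c u p → ¬ Dich c w p → ∀ i, ¬ TwinPair c u w i
  · exact ⟨C, Relation.ReflTransGen.refl, hcov, hgood⟩
  push Not at hgood
  obtain ⟨p, hp, u, hu, w, hw, hup, hwp, i, htw⟩ := hgood
  have hui : u i ≠ c (p i) := fun h => hup ⟨i, h⟩
  have hwi : w i ≠ c (p i) := fun h => hwp ⟨i, h⟩
  have hui' : u i ≠ p i := fun h => hwi (by rw [← h, htw.1, hc])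
  have hwi' : w i ≠ p i := fun h => hui (by rw [← h, htw.1])
  have huw : u ≠ w := fun h => hc' (w i) (by rw [← htw.1, h])
  have key : ∀ x : S, x ≠ p i → x ≠ c (p i) → x ≠ s i ∧ x ≠ c (s i) := by
    intro x h1 h2
    rcases hs i p hp with h | h
    · rw [h] at h1 h2; exact ⟨h1, h2⟩
    · rw [h] at h1 h2; rw [hc] at h2; exact ⟨h2, h1⟩
  set q := Function.update u i (p i) with hq
  set t := Function.update u i (c (p i)) with ht
  have hqi : q i = p i := by simp [hq]
  have hti : t i = c (p i) := by simp [ht]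
  have hqj : ∀ j, j ≠ i → q j = u j := fun j hj => by simp [hq, hj]
  have htj : ∀ j, j ≠ i → t j = u j := fun j hj => by simp [ht, hj]
  have hqt : TwinPair c q t i :=
    ⟨by rw [hqi, hti, hc], fun j hj => by rw [hqj j hj, htj j hj]⟩
  have hlt : ∑ v ∈ (C \ {u, w}) ∪ {q, t}, badCount c s v < n := by
    have h1 : badCount c s q < badCount c s u :=
      badCount_lt c s q u i (by rw [hqi]; exact hs i p hp) (key _ hui' hui) hqj
    have h2 : badCount c s t < badCount c s w :=
      badCount_lt c s t w i
        (by rw [hti]; rcases hs i p hp with h | h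
            · right; rw [h]
            · left; rw [h, hc])
        (key _ hwi' hwi) (fun j hj => by rw [htj j hj, htw.2 j hj])
    have hsub : ({u, w} : Finset (Fin d → S)) ⊆ C := by
      intro x hx
      simp only [Finset.mem_insert, Finset.mem_singleton] at hx
      rcases hx with rfl | rfl <;> assumption
    have h3 := Finset.sum_sdiff (f := badCount c s) hsub
    rw [Finset.sum_pair huw] at h3
    have h4 := Finset.sum_union_inter (s₁ := C \ {u, w}) (s₂ := {q, t}) (f := badCount c s)
    have hqt' : q ≠ t := fun h => hc' (p i) (by rw [← hti, ← hqi, h])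
    rw [Finset.sum_pair hqt'] at h4
    omega
  obtain ⟨C', hgc, hcov', hfin⟩ := ih _ hlt _ rfl (fun p' hp' =>
    covered_step c p' C u w q t i hqj (fun j hj => by rw [hqj j hj, htw.2 j hj]) hqt hc
      (hcov p' hp'))
  exact ⟨C', Relation.ReflTransGen.head ⟨u, w, q, t, i, hu, hw, htw, hqt, hqj, rfl⟩ hgc,
    hcov', hfin⟩

/-- Lemma "bez" of the paper. -/
theorem cover_of_simple_code_twin_pair_free_minimal_covers
    {S : Type} [Fintype S] [DecidableEq S] (c : S → S)
    (hc : ∀ s, c (c s) = s) (hc' : ∀ s, c s ≠ s) {d : ℕ}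
    (P C : Finset (Fin d → S)) (hP : IsCode c P) (hPsimple : SimpleCode c P)
    (hC : IsCode c C) (hcov : Covered c P C) :
    ∃ C' : Finset (Fin d → S), GC c C C' ∧ Covered c P C' ∧
      ∀ p ∈ P, ∀ u ∈ C', ∀ w ∈ C',
        ¬ Dich c u p → ¬ Dich c w p → ∀ i, ¬ TwinPair c u w i := by
  choose s hs using hPsimple
  exact aux c hc hc' P s hs _ C rfl hcov

end PolyboxPaper
end

section
/- If V, W ⊆ S^d are equivalent polybox codes which are not strongly equivalent, then one can pass by gluing and cutting from V to a code V̄ and from W to a code W̄ such that there are decompositions V̄ = V¹ ∪ P and W̄ = W¹ ∪ P (disjoint unions), where V¹ ≠ ∅, V¹ ⊑̇ W¹ and W¹ ⊑̇ V¹. -/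
/- Common framework: polybox codes over a finite alphabet `S` with a
complementation `c : S → S` (an involution without fixed points). -/

namespace PolyboxPaper

variable {S : Type} [Fintype S] [DecidableEq S] {d : ℕ}

/-- Union of boxes. -/
def ubox {X : Fin d → Type} (f : ∀ i, S → Set (X i)) (V : Finset (Fin d → S)) :
    Set (∀ i, X i) := ⋃ v ∈ V, box f v

lemma mem_ubox {X : Fin d → Type} (f : ∀ i, S → Set (X i)) (V : Finset (Fin d → S))
    (x : ∀ i, X i) : x ∈ ubox f V ↔ ∃ v ∈ V, x ∈ box f v := by
  simp [ubox]

lemma dich_symm {c : S → S} (hc : ∀ s, c (c s) = s) {v w : Fin d → S} (h : Dich c v w) :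
    Dich c w v := by
  obtain ⟨i, hi⟩ := h
  exact ⟨i, by rw [hi, hc]⟩

lemma twin_symm {c : S → S} (hc : ∀ s, c (c s) = s) {v w : Fin d → S} {i : Fin d}
    (h : TwinPair c v w i) : TwinPair c w v i :=
  ⟨by rw [h.1, hc], fun j hj => (h.2 j hj).symm⟩

/-- A word of a code on the line of a twin pair belongs to the pair. -/
lemma line_mem {c : S → S} (hc : ∀ s, c (c s) = s) (hc' : ∀ s, c s ≠ s)
    {A : Finset (Fin d → S)} (hA : IsCode c A) {v w x : Fin d → S} {i : Fin d}
    (hv : v ∈ A) (ht : TwinPair c v w i) (hx : x ∈ A)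
    (hxv : ∀ j, j ≠ i → x j = v j) : x = v ∨ x = w := by
  by_cases h : x = v
  · exact Or.inl h
  right
  obtain ⟨k, hk⟩ := hA x hx v hv h
  have hki : k = i := by
    by_contra hne
    rw [hxv k hne] at hk
    exact hc' _ hk.symm
  subst hki
  funext j
  by_cases hj : j = k
  · subst hj
    rw [hk, ht.1, hc]
  · rw [hxv j hj, ht.2 j hj]

lemma dich_line {c : S → S} (hc : ∀ s, c (c s) = s) (hc' : ∀ s, c s ≠ s)
    {v w x q : Fin d → S} {i : Fin d} (ht : TwinPair c v w i)
    (hq : ∀ j, j ≠ i → q j = v j) (h1 : Dich c x v) (h2 : Dich c x w) : Dich c x q := by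
  obtain ⟨j, hj⟩ := h1
  obtain ⟨k, hk⟩ := h2
  by_cases hji : j = i
  · by_cases hki : k = i
    · subst hji
      subst hki
      exfalso
      rw [hk, ht.1, hc] at hj
      exact hc' _ hj
    · exact ⟨k, by rw [hk, hq k hki, ht.2 k hki]⟩
  · exact ⟨j, by rw [hj, hq j hji]⟩

lemma step_code {c : S → S} (hc : ∀ s, c (c s) = s) (hc' : ∀ s, c s ≠ s)
    {A B : Finset (Fin d → S)} (hA : IsCode c A) (h : GCStep c A B) : IsCode c B := by
  obtain ⟨v, w, q, t, i, hv, hw, hvw, hqt, hq, rfl⟩ := h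
  have ht : ∀ j, j ≠ i → t j = v j := fun j hj => by rw [← hqt.2 j hj, hq j hj]
  have key : ∀ x ∈ A \ {v, w}, ∀ y ∈ ({q, t} : Finset (Fin d → S)), Dich c x y := by
    intro x hx y hy
    simp only [Finset.mem_sdiff, Finset.mem_insert, Finset.mem_singleton, not_or] at hx hy
    have h1 := hA x hx.1 v hv hx.2.1
    have h2 := hA x hx.1 w hw hx.2.2
    rcases hy with rfl | rfl
    · exact dich_line hc hc' hvw hq h1 h2
    · exact dich_line hc hc' hvw ht h1 h2
  have hd : Dich c q t := ⟨i, hqt.1⟩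
  intro x hx y hy hxy
  rcases Finset.mem_union.1 hx with hx | hx <;> rcases Finset.mem_union.1 hy with hy | hy
  · exact hA x (Finset.mem_sdiff.1 hx).1 y (Finset.mem_sdiff.1 hy).1 hxy
  · exact key x hx y hy
  · exact dich_symm hc (key y hy x hx)
  · simp only [Finset.mem_insert, Finset.mem_singleton] at hx hy
    rcases hx with rfl | rfl <;> rcases hy with rfl | rfl
    · exact absurd rfl hxy
    · exact hd
    · exact dich_symm hc hd
    · exact absurd rfl hxy

lemma step_symm {c : S → S} (hc : ∀ s, c (c s) = s) (hc' : ∀ s, c s ≠ s)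
    {A B : Finset (Fin d → S)} (hA : IsCode c A) (h : GCStep c A B) : GCStep c B A := by
  obtain ⟨v, w, q, t, i, hv, hw, hvw, hqt, hq, rfl⟩ := h
  have ht : ∀ j, j ≠ i → t j = v j := fun j hj => by rw [← hqt.2 j hj, hq j hj]
  refine ⟨q, t, v, w, i, by simp, by simp, hqt, hvw, fun j hj => (hq j hj).symm, ?_⟩
  have h1 : q ∈ A → q = v ∨ q = w := fun hx => line_mem hc hc' hA hv hvw hx hq
  have h2 : t ∈ A → t = v ∨ t = w := fun hx => line_mem hc hc' hA hv hvw hx ht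
  ext x
  simp only [Finset.mem_union, Finset.mem_sdiff, Finset.mem_insert, Finset.mem_singleton]
  grind

lemma step_ubox {c : S → S} {A B : Finset (Fin d → S)} (h : GCStep c A B)
    {X : Fin d → Type} (f : ∀ i, S → Set (X i)) (hf : IsRealization c X f) :
    ubox f A ⊆ ubox f B := by
  obtain ⟨v, w, q, t, i, hv, hw, hvw, hqt, hq, rfl⟩ := h
  have ht : ∀ j, j ≠ i → t j = v j := fun j hj => by rw [← hqt.2 j hj, hq j hj]
  intro x hx
  rw [mem_ubox] at hx ⊢
  obtain ⟨u, hu, hxu⟩ := hx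
  by_cases huv : u = v ∨ u = w
  · have hx' : ∀ j, j ≠ i → x j ∈ f j (v j) := by
      intro j hj
      rcases huv with rfl | rfl
      · exact hxu j
      · rw [hvw.2 j hj]
        exact hxu j
    by_cases hxt : x i ∈ f i (t i)
    · refine ⟨t, by simp, fun j => ?_⟩
      by_cases hj : j = i
      · subst hj
        exact hxt
      · rw [ht j hj]
        exact hx' j hj
    · refine ⟨q, by simp, fun j => ?_⟩
      by_cases hj : j = i
      · subst hj
        rw [hqt.1, (hf j (t j)).2.2]
        exact hxt
      · rw [hq j hj]
        exact hx' j hj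
  · exact ⟨u, by simp [hu, huv], hxu⟩

lemma gc_all {c : S → S} (hc : ∀ s, c (c s) = s) (hc' : ∀ s, c s ≠ s)
    {A B : Finset (Fin d → S)} (hA : IsCode c A) (h : GC c A B) :
    IsCode c B ∧ GC c B A ∧ ∀ (X : Fin d → Type) (f : ∀ i, S → Set (X i)),
      IsRealization c X f → ubox f A = ubox f B := by
  induction h with
  | refl => exact ⟨hA, Relation.ReflTransGen.refl, fun _ _ _ => rfl⟩
  | tail _ hs ih =>
    obtain ⟨h1, h2, h3⟩ := ih
    have hs' := step_symm hc hc' h1 hs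
    refine ⟨step_code hc hc' h1 hs, Relation.ReflTransGen.head hs' h2, fun X f hf => ?_⟩
    rw [h3 X f hf]
    exact Set.Subset.antisymm (step_ubox hs f hf) (step_ubox hs' f hf)

lemma gc_lift {c : S → S} (hc : ∀ s, c (c s) = s) (hc' : ∀ s, c s ≠ s)
    {A B P : Finset (Fin d → S)} (hA : IsCode c (A ∪ P)) (hd : Disjoint A P) (h : GC c A B) :
    IsCode c (B ∪ P) ∧ Disjoint B P ∧ GC c (A ∪ P) (B ∪ P) := by
  induction h with
  | refl => exact ⟨hA, hd, Relation.ReflTransGen.refl⟩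
  | @tail C D _ hs ih =>
    obtain ⟨h1, h2, h3⟩ := ih
    obtain ⟨v, w, q, t, i, hv, hw, hvw, hqt, hq, rfl⟩ := hs
    have ht : ∀ j, j ≠ i → t j = v j := fun j hj => by rw [← hqt.2 j hj, hq j hj]
    have hvP := Finset.disjoint_left.1 h2 hv
    have hwP := Finset.disjoint_left.1 h2 hw
    have hqP : q ∉ P := fun hx => by
      rcases line_mem hc hc' h1 (Finset.mem_union_left _ hv) hvw
        (Finset.mem_union_right _ hx) hq with rfl | rfl <;> contradiction
    have htP : t ∉ P := fun hx => by
      rcases line_mem hc hc' h1 (Finset.mem_union_left _ hv) hvw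
        (Finset.mem_union_right _ hx) ht with rfl | rfl <;> contradiction
    have hs' : GCStep c (C ∪ P) ((C \ {v, w}) ∪ {q, t} ∪ P) := by
      refine ⟨v, w, q, t, i, Finset.mem_union_left _ hv, Finset.mem_union_left _ hw, hvw,
        hqt, hq, ?_⟩
      ext x
      simp only [Finset.mem_union, Finset.mem_sdiff, Finset.mem_insert, Finset.mem_singleton]
      grind
    refine ⟨step_code hc hc' h1 hs', ?_, h3.tail hs'⟩
    rw [Finset.disjoint_left] at h2 ⊢
    intro x hx
    simp only [Finset.mem_union, Finset.mem_sdiff, Finset.mem_insert,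
      Finset.mem_singleton] at hx
    rcases hx with hx | rfl | rfl
    · exact h2 hx.1
    · exact hqP
    · exact htP

lemma box_disj {c : S → S} {v w : Fin d → S} (h : Dich c v w) {X : Fin d → Type}
    (f : ∀ i, S → Set (X i)) (hf : IsRealization c X f) (x : ∀ i, X i)
    (h1 : x ∈ box f v) (h2 : x ∈ box f w) : False := by
  obtain ⟨i, hi⟩ := h
  have h3 := h1 i
  rw [hi, (hf i (w i)).2.2] at h3
  exact h3 (h2 i)

lemma exists_real (c : S → S) (hc : ∀ s, c (c s) = s) (hc' : ∀ s, c s ≠ s) (d : ℕ) :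
    ∃ (X : Fin d → Type) (f : ∀ i, S → Set (X i)), IsRealization c X f := by
  have e := Fintype.equivFin S
  refine ⟨fun _ => Bool, fun _ s => {b | b = decide (e s < e (c s))}, fun i s => ⟨?_, ?_, ?_⟩⟩
  · exact ⟨_, rfl⟩
  · intro h
    dsimp only at h
    have : (!decide (e s < e (c s))) ∈ ({b | b = decide (e s < e (c s))} : Set Bool) := by
      rw [h]
      trivial
    simp at this
  · have hne : e (c s) ≠ e s := fun h => hc' s (e.injective h)
    ext b
    simp only [hc, Set.mem_ofPred_eq, Set.mem_compl_iff]
    rcases lt_or_gt_of_ne hne with h | h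
    · simp [h, not_lt.2 h.le]
    · simp [h, not_lt.2 h.le]

/-- A code contained in a code with the same union is equal to it. -/
lemma eq_of_subset {c : S → S} (hc : ∀ s, c (c s) = s) (hc' : ∀ s, c s ≠ s)
    {A B : Finset (Fin d → S)} (hB : IsCode c B) (hAB : A ⊆ B)
    (hu : ∀ (X : Fin d → Type) (f : ∀ i, S → Set (X i)),
      IsRealization c X f → ubox f A = ubox f B) : A = B := by
  refine Finset.Subset.antisymm hAB fun w hw => ?_
  by_contra hwA
  obtain ⟨X, f, hf⟩ := exists_real c hc hc' d
  choose x hx using fun i => (hf i (w i)).1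
  have hxB : x ∈ ubox f B := (mem_ubox f B x).2 ⟨w, hw, hx⟩
  rw [← hu X f hf, mem_ubox] at hxB
  obtain ⟨v, hv, hxv⟩ := hxB
  exact box_disj (hB v (hAB hv) w hw (fun h => hwA (h ▸ hv))) f hf x hxv hx

/-- One half of the conclusion, for a pair with maximal intersection. -/
lemma dot_half {c : S → S} (hc : ∀ s, c (c s) = s) (hc' : ∀ s, c s ≠ s)
    {A B : Finset (Fin d → S)} (hA : IsCode c A) (hB : IsCode c B)
    (hu : ∀ (X : Fin d → Type) (f : ∀ i, S → Set (X i)),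
      IsRealization c X f → ubox f A = ubox f B)
    (hmax : ∀ B', GC c B B' → (A ∩ B').card ≤ (A ∩ B).card) :
    DotCovered c (A \ (A ∩ B)) (B \ (A ∩ B)) := by
  have hBe : B \ (A ∩ B) ∪ A ∩ B = B := Finset.sdiff_union_of_subset Finset.inter_subset_right
  constructor
  · intro v hv X f hf x hx
    have hv' := Finset.mem_sdiff.1 hv
    change x ∈ ubox f _
    have hxB : x ∈ ubox f B := by
      rw [← hu X f hf, mem_ubox]
      exact ⟨v, hv'.1, hx⟩
    rw [mem_ubox] at hxB ⊢
    obtain ⟨w, hw, hxw⟩ := hxB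
    refine ⟨w, Finset.mem_sdiff.2 ⟨hw, fun hwi => ?_⟩, hxw⟩
    exact box_disj (hA v hv'.1 w (Finset.mem_inter.1 hwi).1
      (fun h => hv'.2 (h ▸ hwi))) f hf x hx hxw
  · intro v hv B1 hg hvB
    have hv' := Finset.mem_sdiff.1 hv
    obtain ⟨-, -, h3⟩ := gc_lift hc hc' (P := A ∩ B) (by rw [hBe]; exact hB)
      Finset.sdiff_disjoint hg
    rw [hBe] at h3
    have h4 := hmax _ h3
    have h5 : insert v (A ∩ B) ⊆ A ∩ (B1 ∪ A ∩ B) := by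
      intro y hy
      grind
    have h6 := Finset.card_le_card h5
    rw [Finset.card_insert_of_notMem hv'.2] at h6
    omega

/-- Lemma "sind" of the paper. -/
theorem not_strongly_equivalent_decomposition
    {S : Type} [Fintype S] [DecidableEq S] (c : S → S)
    (hc : ∀ s, c (c s) = s) (hc' : ∀ s, c s ≠ s) {d : ℕ}
    (V W : Finset (Fin d → S)) (hV : IsCode c V) (hW : IsCode c W)
    (heq : Equivalent c V W) (hnse : ¬ GC c V W) :
    ∃ V' W' V₁ W₁ P : Finset (Fin d → S),
      GC c V V' ∧ GC c W W' ∧ V' = V₁ ∪ P ∧ W' = W₁ ∪ P ∧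
      Disjoint V₁ P ∧ Disjoint W₁ P ∧ V₁.Nonempty ∧
      DotCovered c V₁ W₁ ∧ DotCovered c W₁ V₁ := by
  have hu : ∀ (X : Fin d → Type) (f : ∀ i, S → Set (X i)),
      IsRealization c X f → ubox f V = ubox f W := by
    intro X f hf
    refine Set.Subset.antisymm ?_ ?_
    · exact Set.iUnion₂_subset fun v hv => heq.1 v hv X f hf
    · exact Set.iUnion₂_subset fun v hv => heq.2 v hv X f hf
  obtain ⟨⟨A, B⟩, ⟨hVA, hWB⟩, hmax⟩ := Set.exists_max_image
    {p : Finset (Fin d → S) × Finset (Fin d → S) | GC c V p.1 ∧ GC c W p.2}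
    (fun p => (p.1 ∩ p.2).card) (Set.toFinite _)
    ⟨(V, W), Relation.ReflTransGen.refl, Relation.ReflTransGen.refl⟩
  dsimp only at hVA hWB hmax
  obtain ⟨hA, -, huA⟩ := gc_all hc hc' hV hVA
  obtain ⟨hB, hBW, huB⟩ := gc_all hc hc' hW hWB
  have huAB : ∀ (X : Fin d → Type) (f : ∀ i, S → Set (X i)),
      IsRealization c X f → ubox f A = ubox f B := fun X f hf => by
    rw [← huA X f hf, ← huB X f hf, hu X f hf]
  refine ⟨A, B, A \ (A ∩ B), B \ (A ∩ B), A ∩ B, hVA, hWB,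
    (Finset.sdiff_union_of_subset Finset.inter_subset_left).symm,
    (Finset.sdiff_union_of_subset Finset.inter_subset_right).symm,
    Finset.sdiff_disjoint, Finset.sdiff_disjoint, ?_, ?_, ?_⟩
  · rw [Finset.nonempty_iff_ne_empty]
    intro h
    have hAB : A ⊆ B := (Finset.sdiff_eq_empty_iff_subset.1 h).trans Finset.inter_subset_right
    have := eq_of_subset hc hc' hB hAB huAB
    subst this
    exact hnse (hVA.trans hBW)
  · exact dot_half hc hc' hA hB huAB fun B' h => hmax (A, B') ⟨hVA, hWB.trans h⟩
  · have := dot_half hc hc' hB hA (fun X f hf => (huAB X f hf).symm) fun A' h => by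
      rw [Finset.inter_comm B, Finset.inter_comm B]
      exact hmax (A', B) ⟨hVA.trans h, hWB⟩
    rwa [Finset.inter_comm B A] at this

end PolyboxPaper
end

section
/- Let v ∈ S^d and let C_v ⊆ S^d be a minimal cover of v with at most 4 words. Then one can pass from C_v by gluing and cutting to a polybox code C̄_v which contains the word v. -/
/- Common framework: polybox codes over a finite alphabet `S` with a
complementation `c : S → S` (an involution without fixed points). -/

namespace PolyboxPaper

variable {S : Type} [Fintype S] [DecidableEq S] {d : ℕ}

/-- Combinatorial form of being covered. -/
def Cov {S : Type} {d : ℕ} (c : S → S) (V : Finset (Fin d → S)) (v : Fin d → S) : Prop :=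
  ∀ T : Fin d → Set S, (∀ i, v i ∈ T i) → (∀ i s, s ∈ T i → c s ∉ T i) →
    ∃ q ∈ V, ∀ i, c (q i) ∉ T i

theorem exists_orient {S : Type} [Fintype S] (c : S → S)
    (hc : ∀ s, c (c s) = s) (hc' : ∀ s, c s ≠ s) (T : Set S)
    (hT : ∀ s, s ∈ T → c s ∉ T) :
    ∃ x : S → Prop, (∀ s, x (c s) ↔ ¬ x s) ∧ ∀ s ∈ T, x s := by
  classical
  let e := Fintype.equivFin S
  refine ⟨fun s => s ∈ T ∨ (c s ∉ T ∧ e s < e (c s)), ?_, fun s hs => Or.inl hs⟩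
  intro s
  have h1 := hT s
  have h2 := hT (c s)
  have h3 : e s ≠ e (c s) := fun h => hc' s (e.injective h).symm
  rw [hc] at h2
  simp only [hc]
  have h4 : e (c s) < e s ↔ ¬ e s < e (c s) := by
    constructor
    · intro h; exact not_lt.mpr h.le
    · intro h; exact lt_of_le_of_ne (not_lt.mp h) h3.symm
  rw [h4]
  tauto

theorem cov_of_covered {S : Type} [Fintype S] {d : ℕ} (c : S → S)
    (hc : ∀ s, c (c s) = s) (hc' : ∀ s, c s ≠ s) (V : Finset (Fin d → S)) (v : Fin d → S)
    (h : CoveredWord c v V) : Cov c V v := by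
  intro T hv hT
  have hh := h (fun _ => {x : S → Prop // ∀ s, x (c s) ↔ ¬ x s})
    (fun _ s => {x | x.1 s}) ?_
  · choose x hx hxT using fun i => exists_orient c hc hc' (T i) (hT i)
    have := hh (show (fun i => ⟨x i, hx i⟩) ∈ box _ v from fun i => hxT i _ (hv i))
    simp only [Set.mem_iUnion] at this
    obtain ⟨q, hq, hq2⟩ := this
    refine ⟨q, hq, fun i hi => ?_⟩
    have h1 : x i (q i) := hq2 i
    exact (hx i _).1 (hxT i _ hi) h1
  · intro i s
    have key : ∀ s : S, ∃ x : {x : S → Prop // ∀ s, x (c s) ↔ ¬ x s}, x.1 s := by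
      intro s
      obtain ⟨x, hx, h2⟩ := exists_orient c hc hc' {s} (by
        intro t ht; rw [Set.mem_singleton_iff] at *; subst ht; exact hc' t)
      exact ⟨⟨x, hx⟩, h2 s rfl⟩
    refine ⟨key s, ?_, ?_⟩
    · intro h
      obtain ⟨x, hx⟩ := key (c s)
      have : x ∈ {x : {x : S → Prop // ∀ s, x (c s) ↔ ¬ x s} | x.1 s} := by
        have h' : {x : {x : S → Prop // ∀ s, x (c s) ↔ ¬ x s} | x.1 s} = Set.univ := h
        rw [h']; trivial
      exact (x.2 s).1 hx this
    · ext x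
      exact x.2 s

section Twin

variable {T : Type} [DecidableEq T] {e : ℕ}

/-- `r` is dichotomous to `w` exactly at position `i`. -/
def Opp (c : T → T) (w : Fin e → T) (i : Fin e) (r : Fin e → T) : Prop :=
  r i = c (w i) ∧ ∀ j, j ≠ i → r j ≠ c (w j)

theorem opp_exists (c : T → T) (hc : ∀ s, c (c s) = s) (hc' : ∀ s, c s ≠ s)
    (v : Fin e → T) (C : Finset (Fin e → T)) (hcode : IsCode c C) (hcov : Cov c C v)
    (hnd : ∀ q ∈ C, ∀ i, q i ≠ c (v i)) (w : Fin e → T) (hw : w ∈ C) (i : Fin e)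
    (hi : w i ≠ v i) (j : Fin e) (hj : j ≠ i) (s : T) (hs1 : s ≠ c (w j)) (hs2 : s ≠ c (v j)) :
    ∃ r ∈ C, Opp c w i r ∧ r j ≠ c s := by
  have inj : ∀ a b, c a = c b → a = b := fun a b h => by rw [← hc a, h, hc]
  obtain ⟨q, hq, hqT⟩ := hcov
    (fun k => {t | t = v k ∨ (k = i ∧ t = c (w k)) ∨ (k ≠ i ∧ t = w k) ∨ (k = j ∧ t = s)})
    (fun k => Or.inl rfl) (by
      intro k t ht ht2
      have := hnd w hw k
      simp only [Set.mem_ofPred_eq] at ht ht2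
      by_cases hki : k = i
      · subst hki
        have : k ≠ j := fun h => hj h.symm
        grind
      · by_cases hkj : k = j
        · subst hkj
          grind
        · grind)
  simp only [Set.mem_ofPred_eq, not_or, not_and] at hqT
  have h1 : q i ≠ w i := fun h => (hqT i).2.1 rfl (by rw [h])
  have h2 : ∀ k, k ≠ i → q k ≠ c (w k) := fun k hk h => (hqT k).2.2.1 hk (by rw [h, hc])
  obtain ⟨k, hk⟩ := hcode q hq w hw (fun h => h1 (by rw [h]))
  have hki : k = i := by
    by_contra hne
    exact h2 k hne hk
  subst hki
  exact ⟨q, hq, ⟨hk, h2⟩, fun h => (hqT j).2.2.2 rfl (by rw [h, hc])⟩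

theorem opp_exists' (c : T → T) (hc : ∀ s, c (c s) = s) (hc' : ∀ s, c s ≠ s)
    (v : Fin e → T) (C : Finset (Fin e → T)) (hcode : IsCode c C) (hcov : Cov c C v)
    (hnd : ∀ q ∈ C, ∀ i, q i ≠ c (v i)) (w : Fin e → T) (hw : w ∈ C) (i : Fin e)
    (hi : w i ≠ v i) : ∃ r ∈ C, Opp c w i r := by
  have inj : ∀ a b, c a = c b → a = b := fun a b h => by rw [← hc a, h, hc]
  obtain ⟨q, hq, hqT⟩ := hcov
    (fun k => {t | t = v k ∨ (k = i ∧ t = c (w k)) ∨ (k ≠ i ∧ t = w k)})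
    (fun k => Or.inl rfl) (by
      intro k t ht ht2
      have := hnd w hw k
      simp only [Set.mem_ofPred_eq] at ht ht2
      by_cases hki : k = i
      · subst hki
        grind
      · grind)
  simp only [Set.mem_ofPred_eq, not_or, not_and] at hqT
  have h1 : q i ≠ w i := fun h => (hqT i).2.1 rfl (by rw [h])
  have h2 : ∀ k, k ≠ i → q k ≠ c (w k) := fun k hk h => (hqT k).2.2 hk (by rw [h, hc])
  obtain ⟨k, hk⟩ := hcode q hq w hw (fun h => h1 (by rw [h]))
  have hki : k = i := by
    by_contra hne
    exact h2 k hne hk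
  subst hki
  exact ⟨q, hq, hk, h2⟩

/-- The only word opposite at `i` has letters from `w` and `v` elsewhere. -/
theorem opp_unique (c : T → T) (hc : ∀ s, c (c s) = s) (hc' : ∀ s, c s ≠ s)
    (v : Fin e → T) (C : Finset (Fin e → T)) (hcode : IsCode c C) (hcov : Cov c C v)
    (hnd : ∀ q ∈ C, ∀ i, q i ≠ c (v i)) (w : Fin e → T) (hw : w ∈ C) (i : Fin e)
    (hi : w i ≠ v i) (r : Fin e → T) (hu : ∀ r' ∈ C, Opp c w i r' → r' = r)
    (j : Fin e) (hj : j ≠ i) : r j = w j ∨ r j = v j := by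
  have inj : ∀ a b, c a = c b → a = b := fun a b h => by rw [← hc a, h, hc]
  by_contra hcon
  rw [not_or] at hcon
  obtain ⟨r', h1, h2, h3⟩ := opp_exists c hc hc' v C hcode hcov hnd w hw i hi j hj (c (r j))
    (fun h => hcon.1 (inj _ _ h)) (fun h => hcon.2 (inj _ _ h))
  rw [hu r' h1 h2, hc] at h3
  exact h3 rfl

theorem twin_exists (c : T → T) (hc : ∀ s, c (c s) = s) (hc' : ∀ s, c s ≠ s)
    (v : Fin e → T) (C : Finset (Fin e → T)) (hcode : IsCode c C) (hcov : Cov c C v)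
    (hnd : ∀ q ∈ C, ∀ i, q i ≠ c (v i)) (hcard : C.card ≤ 4) (hv : v ∉ C) :
    ∃ p ∈ C, ∃ q ∈ C, ∃ i, TwinPair c p q i := by
  classical
  by_contra hno
  have hno : ∀ p ∈ C, ∀ q ∈ C, ∀ i, p i = c (q i) → ∃ j, j ≠ i ∧ p j ≠ q j := by
    intro p hp q hq i h
    by_contra hcon
    push Not at hcon
    exact hno ⟨p, hp, q, hq, i, h, hcon⟩
  have inj : ∀ a b, c a = c b → a = b := fun a b h => by rw [← hc a, h, hc]
  have hne : C.Nonempty := by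
    obtain ⟨q, hq, -⟩ := hcov (fun i => {v i}) (fun i => rfl)
      (by intro i s hs; rw [Set.mem_singleton_iff] at *; subst hs; exact hc' _)
    exact ⟨q, hq⟩
  let supp : (Fin e → T) → Finset (Fin e) := fun w => Finset.univ.filter fun i => w i ≠ v i
  have msupp : ∀ w i, i ∈ supp w ↔ w i ≠ v i := by intro w i; simp [supp]
  obtain ⟨w, hw, hmax⟩ := Finset.exists_max_image C (fun w => (supp w).card) hne
  have hwv : ∀ i, w i ≠ c (v i) := hnd w hw
  have oppne : ∀ i r, r ∈ C → Opp c w i r → r i ≠ v i := by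
    intro i r hr ho h
    have := ho.1
    rw [h] at this
    exact hwv i (by rw [this, hc])
  have oppw : ∀ i, ¬ Opp c w i w := fun i h => hc' _ h.1.symm
  have oppd : ∀ i j r, Opp c w i r → Opp c w j r → i = j := by
    intro i j r h1 h2
    by_contra hij
    exact h2.2 i hij h1.1
  have hex := fun i hi => opp_exists' c hc hc' v C hcode hcov hnd w hw i hi
  have huq := fun i hi => opp_unique c hc hc' v C hcode hcov hnd w hw i hi
  have hex' : ∀ i, ∃ r, i ∈ supp w → r ∈ C ∧ Opp c w i r := by
    intro i
    by_cases h : i ∈ supp w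
    · obtain ⟨r, h1, h2⟩ := hex i ((msupp _ _).1 h)
      exact ⟨r, fun _ => ⟨h1, h2⟩⟩
    · exact ⟨w, fun h' => absurd h' h⟩
  choose R hR using hex'
  have hle : (supp w).card ≤ 3 := by
    have h1 : (insert w ((supp w).image R)).card ≤ C.card := by
      apply Finset.card_le_card
      intro x hx
      rw [Finset.mem_insert, Finset.mem_image] at hx
      rcases hx with rfl | ⟨i, hi, rfl⟩
      · exact hw
      · exact (hR i hi).1
    rw [Finset.card_insert_of_notMem, Finset.card_image_of_injOn] at h1
    · omega
    · intro i hi j hj hij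
      have a := (hR i hi).2
      have b := (hR j hj).2
      have hij : R i = R j := hij
      rw [hij] at a
      exact oppd _ _ _ a b
    · rw [Finset.mem_image]
      rintro ⟨i, hi, h⟩
      have a := (hR i hi).2
      rw [h] at a
      exact oppw i a
  -- a word differing from `v` only at `m` forces the letter of the others
  have force : ∀ m r, r ∈ C → r m = c (w m) → (∀ k, k ≠ m → r k = v k) →
      ∀ t ∈ C, t ≠ r → t m = w m := by
    intro m r hr hrm hrv t ht htr
    obtain ⟨k, hk⟩ := hcode t ht r hr htr
    by_cases hkm : k = m
    · subst hkm; rw [hk, hrm, hc]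
    · rw [hrv k hkm] at hk
      exact absurd hk (hnd t ht k)
  -- words with support containing that of `w`
  have full : ∀ t ∈ C, supp w ⊆ supp t → ∀ k, w k = v k → t k = v k := by
    intro t ht hsub k hk
    have := Finset.eq_of_subset_of_card_le hsub (hmax t ht)
    by_contra h
    have h2 := (msupp t k).2 h
    rw [← this] at h2
    exact (msupp w k).1 h2 hk
  have hpos : (supp w).card ≠ 0 := by
    intro h
    rw [Finset.card_eq_zero] at h
    apply hv
    have : w = v := by
      funext i
      by_contra hi
      have := (msupp w i).2 hi
      rw [h] at this
      simp at this
    rwa [← this]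
  have cases3 : (supp w).card = 1 ∨ (supp w).card = 2 ∨ (supp w).card = 3 := by omega
  rcases cases3 with h | h | h
  · obtain ⟨i, hi⟩ := Finset.card_eq_one.1 h
    have his : i ∈ supp w := by rw [hi]; simp
    obtain ⟨hr, ho⟩ := hR i his
    obtain ⟨j, hj, hjne⟩ := hno _ hr w hw i ho.1
    have hwj : w j = v j := by
      by_contra hh
      have := (msupp w j).2 hh
      rw [hi] at this
      exact hj (by simpa using this)
    apply hjne
    rw [hwj]
    refine full _ hr ?_ j hwj
    rw [hi]
    intro k hk
    rw [Finset.mem_singleton] at hk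
    subst hk
    exact (msupp _ _).2 (oppne _ _ hr ho)
  · obtain ⟨i, j, hij, hs⟩ := Finset.card_eq_two.1 h
    have main : ∀ i j, i ≠ j → supp w = {i, j} → (∀ r' ∈ C, Opp c w i r' → r' = R i) → False := by
      intro i j hij hs hu
      have his : i ∈ supp w := by rw [hs]; simp
      have hjs : j ∈ supp w := by rw [hs]; simp
      have hwo : ∀ k, k ≠ i → k ≠ j → w k = v k := by
        intro k h1 h2
        by_contra hh
        have := (msupp w k).2 hh
        rw [hs] at this
        simp [h1, h2] at this
      have hq := huq i ((msupp _ _).1 his) (R i) hu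
      obtain ⟨hr, ho⟩ := hR i his
      obtain ⟨ht, hto⟩ := hR j hjs
      obtain ⟨k, hk, hkne⟩ := hno _ hr w hw i ho.1
      have hkj : k = j := by
        by_contra hkj
        have := hq k hk
        rw [← hwo k hk hkj] at this
        tauto
      subst hkj
      have hF := force i (R i) hr ho.1 (by
        intro l hl
        rcases hq l hl with h1 | h1
        · by_cases hlk : l = k
          · subst hlk; exact absurd h1 hkne
          · rw [h1]; exact hwo l hl hlk
        · exact h1) (R k) ht (by
          intro heq
          rw [heq] at hto
          exact hij (oppd _ _ _ ho hto))
      obtain ⟨l, hl, hlne⟩ := hno _ ht w hw k hto.1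
      have hli : l ≠ i := fun h => hlne (by rw [h, hF])
      apply hlne
      rw [hwo l hli hl]
      refine full _ ht ?_ l (hwo l hli hl)
      intro m hm
      rw [hs, Finset.mem_insert, Finset.mem_singleton] at hm
      rw [msupp]
      rcases hm with rfl | rfl
      · rw [hF]; exact (msupp _ _).1 his
      · exact oppne _ _ ht hto
    by_cases hu : ∀ r' ∈ C, Opp c w i r' → r' = R i
    · exact main i j hij hs hu
    by_cases hu' : ∀ r' ∈ C, Opp c w j r' → r' = R j
    · exact main j i hij.symm (by rw [hs, Finset.pair_comm]) hu'
    push Not at hu hu'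
    obtain ⟨x, hx, hxo, hxne⟩ := hu
    obtain ⟨y, hy, hyo, hyne⟩ := hu'
    obtain ⟨hr, ho⟩ := hR i (by rw [hs]; simp)
    obtain ⟨ht, hto⟩ := hR j (by rw [hs]; simp)
    have h5 : ({w, x, R i, y, R j} : Finset (Fin e → T)).card ≤ C.card := by
      apply Finset.card_le_card
      intro z hz
      simp only [Finset.mem_insert, Finset.mem_singleton] at hz
      rcases hz with rfl | rfl | rfl | rfl | rfl <;> assumption
    have dd : ∀ p q, Opp c w i p → Opp c w j q → p ≠ q := by
      intro p q hp hq h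
      subst h
      exact hij (oppd _ _ _ hp hq)
    have dw : ∀ k p, Opp c w k p → w ≠ p := by
      intro k p hp h
      subst h
      exact oppw k hp
    rw [Finset.card_insert_of_notMem, Finset.card_insert_of_notMem, Finset.card_insert_of_notMem,
      Finset.card_insert_of_notMem, Finset.card_singleton] at h5
    · omega
    · simpa using hyne
    · simp [dd _ _ ho hyo, dd _ _ ho hto]
    · simp [dd _ _ hxo hyo, dd _ _ hxo hto, hxne]
    · simp [dw _ _ hxo, dw _ _ ho, dw _ _ hyo, dw _ _ hto]
  · -- every word other than `w` is some `R i`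
    have hall : ∀ t ∈ C, t ≠ w → ∃ i ∈ supp w, t = R i := by
      have h1 : insert w ((supp w).image R) = C := by
        apply Finset.eq_of_subset_of_card_le
        · intro x hx
          rw [Finset.mem_insert, Finset.mem_image] at hx
          rcases hx with rfl | ⟨i, hi, rfl⟩
          · exact hw
          · exact (hR i hi).1
        · rw [Finset.card_insert_of_notMem, Finset.card_image_of_injOn]
          · omega
          · intro i hi j hj hij
            have a := (hR i hi).2
            have b := (hR j hj).2
            have hij : R i = R j := hij
            rw [hij] at a
            exact oppd _ _ _ a b
          · rw [Finset.mem_image]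
            rintro ⟨i, hi, h⟩
            have a := (hR i hi).2
            rw [h] at a
            exact oppw i a
      intro t ht htw
      rw [← h1, Finset.mem_insert, Finset.mem_image] at ht
      rcases ht with ht | ⟨i, hi, rfl⟩
      · exact absurd ht htw
      · exact ⟨i, hi, rfl⟩
    have hq : ∀ i ∈ supp w, ∀ k, k ≠ i → R i k = w k ∨ R i k = v k := by
      intro i hi
      refine huq i ((msupp _ _).1 hi) (R i) ?_
      intro r' hr' hro
      obtain ⟨j, hj, rfl⟩ := hall r' hr' (fun hh => by rw [hh] at hro; exact oppw i hro)
      rw [oppd _ _ _ hro (hR j hj).2]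
    -- the antipodal point
    obtain ⟨q, hqC, hqT⟩ := hcov
      (fun k => {t | t = v k ∨ (k ∈ supp w ∧ t = c (w k))}) (fun k => Or.inl rfl) (by
        intro k t ht ht2
        have := hwv k
        simp only [Set.mem_ofPred_eq, msupp] at ht ht2
        grind)
    simp only [Set.mem_ofPred_eq, not_or, not_and] at hqT
    have hqw : ∀ k ∈ supp w, q k ≠ w k := fun k hk hh => (hqT k).2 hk (by rw [hh])
    obtain ⟨i0, hi0⟩ : (supp w).Nonempty := Finset.card_pos.1 (by omega)
    obtain ⟨m, hm, rfl⟩ := hall q hqC (fun hh => hqw i0 hi0 (by rw [hh]))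
    obtain ⟨hr, ho⟩ := hR m hm
    have hF := force m (R m) hr ho.1 (by
      intro k hk
      rcases hq m hm k hk with h1 | h1
      · by_cases hks : k ∈ supp w
        · exact absurd h1 (hqw k hks)
        · rw [msupp, not_not] at hks
          rw [h1, hks]
      · exact h1)
    have h2 : ((supp w).erase m).card = 2 := by rw [Finset.card_erase_of_mem hm]; omega
    obtain ⟨j, l, hjl, hs⟩ := Finset.card_eq_two.1 h2
    have hj : j ≠ m ∧ j ∈ supp w := by rw [← Finset.mem_erase, hs]; simp
    have hl : l ≠ m ∧ l ∈ supp w := by rw [← Finset.mem_erase, hs]; simp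
    have hwo : ∀ k, k ≠ m → k ≠ j → k ≠ l → w k = v k := by
      intro k h0 h1 h2
      by_contra hh
      have := Finset.mem_erase.2 ⟨h0, (msupp w k).2 hh⟩
      rw [hs] at this
      simp [h1, h2] at this
    have hRne : ∀ a b, a ∈ supp w → b ∈ supp w → a ≠ b → R a ≠ R b := by
      intro a b ha hb hab hh
      have h1 := (hR a ha).2
      rw [hh] at h1
      exact hab (oppd _ _ _ h1 (hR b hb).2)
    have fin : ∀ j l, j ∈ supp w → j ≠ m → (∀ k, k ≠ m → k ≠ j → k ≠ l → w k = v k) →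
        R j l = w l → False := by
      intro j l hjs hjm hwo hjl
      obtain ⟨k, hk, hkne⟩ := hno _ (hR j hjs).1 w hw j (hR j hjs).2.1
      have h1 : k ≠ m := by
        intro hkm
        rw [hkm] at hkne
        exact hkne (hF _ (hR j hjs).1 (hRne _ _ hjs hm hjm))
      have h2 : k ≠ l := by
        rintro rfl
        exact hkne hjl
      have := hq j hjs k hk
      rw [← hwo k h1 hk h2] at this
      tauto
    obtain ⟨k, hk⟩ := hcode _ (hR j hj.2).1 _ (hR l hl.2).1 (hRne _ _ hj.2 hl.2 hjl)
    have aj := hF _ (hR j hj.2).1 (hRne _ _ hj.2 hm hj.1)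
    have al := hF _ (hR l hl.2).1 (hRne _ _ hl.2 hm hl.1)
    by_cases hkm : k = m
    · subst hkm
      rw [aj, al] at hk
      exact hc' _ hk.symm
    by_cases hkj : k = j
    · subst hkj
      rw [(hR k hj.2).2.1] at hk
      exact fin l k hl.2 hl.1 (fun x a b c => hwo x a c b) (inj _ _ hk).symm
    by_cases hkl : k = l
    · subst hkl
      rw [(hR k hl.2).2.1, hc] at hk
      exact fin j k hj.2 hj.1 hwo hk
    · have h3 := hq l hl.2 k hkl
      rw [hwo k hkm hkj hkl, or_self] at h3
      rw [h3] at hk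
      exact hnd _ (hR j hj.2).1 k hk

theorem reach (c : T → T) (hc : ∀ s, c (c s) = s) (hc' : ∀ s, c s ≠ s)
    (v : Fin e → T) (n : ℕ) : ∀ (V C : Finset (Fin e → T)), C ⊆ V → IsCode c C → Cov c C v →
    (∀ q ∈ C, ∀ i, q i ≠ c (v i)) → C.card ≤ 4 → C.card ≤ n →
    ∃ V' : Finset (Fin e → T), GC c V V' ∧ v ∈ V' := by
  induction n with
  | zero =>
    intro V C _ _ hcov _ _ h0
    obtain ⟨q, hq, -⟩ := hcov (fun i => {v i}) (fun i => rfl)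
      (by intro i s hs; rw [Set.mem_singleton_iff] at *; subst hs; exact hc' _)
    have := Finset.card_pos.2 ⟨q, hq⟩
    omega
  | succ n ih =>
    intro V C hCV hcode hcov hnd h4 hn
    by_cases hv : v ∈ C
    · exact ⟨V, Relation.ReflTransGen.refl, hCV hv⟩
    obtain ⟨p, hp, q, hq, i, htw⟩ := twin_exists c hc hc' v C hcode hcov hnd h4 hv
    have hpq : p ≠ q := by
      rintro rfl
      exact hc' _ htw.1.symm
    let r : Fin e → T := Function.update p i (v i)
    let t : Fin e → T := Function.update p i (c (v i))
    have hri : r i = v i := by simp [r]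
    have hti : t i = c (v i) := by simp [t]
    have hrj : ∀ j, j ≠ i → r j = p j := fun j hj => by simp [r, hj]
    have htj : ∀ j, j ≠ i → t j = p j := fun j hj => by simp [t, hj]
    have hcardC : ((C \ {p, q}) ∪ {r}).card + 1 ≤ C.card := by
      have h1 : (C \ {p, q}).card = C.card - 2 := by
        rw [Finset.card_sdiff_of_subset, Finset.card_pair hpq]
        intro z hz
        simp only [Finset.mem_insert, Finset.mem_singleton] at hz
        rcases hz with rfl | rfl <;> assumption
      have h2 : 2 ≤ C.card := by
        rw [← Finset.card_pair hpq]
        apply Finset.card_le_card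
        intro z hz
        simp only [Finset.mem_insert, Finset.mem_singleton] at hz
        rcases hz with rfl | rfl <;> assumption
      have h3 := Finset.card_union_le (C \ {p, q}) {r}
      rw [Finset.card_singleton] at h3
      omega
    have hdr : ∀ u ∈ C, u ≠ p → u ≠ q → ∃ j, j ≠ i ∧ u j = c (p j) := by
      intro u hu h1 h2
      obtain ⟨j, hj⟩ := hcode u hu p hp h1
      obtain ⟨k, hk⟩ := hcode u hu q hq h2
      by_cases hji : j = i
      · by_cases hki : k = i
        · subst hji
          subst hki
          rw [hj, htw.1, hc] at hk
          exact absurd hk.symm (hc' _)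
        · exact ⟨k, hki, by rw [hk, htw.2 k hki]⟩
      · exact ⟨j, hji, hj⟩
    obtain ⟨V', hV', hvV'⟩ := ih ((V \ {p, q}) ∪ {r, t}) ((C \ {p, q}) ∪ {r})
      (by
        intro z hz
        simp only [Finset.mem_union, Finset.mem_sdiff, Finset.mem_insert,
          Finset.mem_singleton] at hz ⊢
        rcases hz with ⟨h1, h2⟩ | h1
        · exact Or.inl ⟨hCV h1, h2⟩
        · exact Or.inr (Or.inl h1))
      (by
        intro x hx y hy hxy
        simp only [Finset.mem_union, Finset.mem_sdiff, Finset.mem_insert,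
          Finset.mem_singleton, not_or] at hx hy
        rcases hx with ⟨h1, h2, h3⟩ | h1 <;> rcases hy with ⟨h1', h2', h3'⟩ | h1'
        · exact hcode x h1 y h1' hxy
        · obtain ⟨j, hj, hj2⟩ := hdr x h1 h2 h3
          exact ⟨j, by rw [h1', hrj j hj, hj2]⟩
        · obtain ⟨j, hj, hj2⟩ := hdr y h1' h2' h3'
          exact ⟨j, by rw [h1, hrj j hj, hj2, hc]⟩
        · exact absurd (h1.trans h1'.symm) hxy)
      (by
        intro U hvU hU
        obtain ⟨u, hu, huU⟩ := hcov U hvU hU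
        by_cases hpqu : u = p ∨ u = q
        · refine ⟨r, by simp, fun j => ?_⟩
          by_cases hj : j = i
          · subst hj
            rw [hri]
            exact hU j _ (hvU j)
          · rw [hrj j hj]
            rcases hpqu with rfl | rfl
            · exact huU j
            · rw [htw.2 j hj]; exact huU j
        · refine ⟨u, ?_, huU⟩
          simp [hu, hpqu])
      (by
        intro x hx j
        simp only [Finset.mem_union, Finset.mem_sdiff, Finset.mem_singleton] at hx
        rcases hx with ⟨h1, -⟩ | rfl
        · exact hnd x h1 j
        · by_cases hj : j = i
          · subst hj
            rw [hri]
            exact (hc' _).symm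
          · rw [hrj j hj]
            exact hnd p hp j)
      (by omega) (by omega)
    refine ⟨V', Relation.ReflTransGen.head ?_ hV', hvV'⟩
    exact ⟨p, q, r, t, i, hCV hp, hCV hq, htw, ⟨by rw [hri, hti, hc],
      fun j hj => by rw [hrj j hj, htj j hj]⟩, hrj, rfl⟩

end Twin

/-- Lemma "four" of the paper. -/
theorem small_min_cover_reaches_word
    {S : Type} [Fintype S] [DecidableEq S] (c : S → S)
    (hc : ∀ s, c (c s) = s) (hc' : ∀ s, c s ≠ s) {d : ℕ}
    (v : Fin d → S) (C : Finset (Fin d → S))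
    (hmin : MinCoverWord c C v) (hcard : C.card ≤ 4) :
    ∃ C' : Finset (Fin d → S), GC c C C' ∧ v ∈ C' := by
  obtain ⟨hcode, hcov, hnd⟩ := hmin
  exact reach c hc hc' v 4 C C (Finset.Subset.refl _) hcode
    (cov_of_covered c hc hc' C v hcov) (fun q hq i h => hnd q hq ⟨i, h⟩) hcard hcard

end PolyboxPaper
end

section
/- Let V, W ⊆ S^d be nonempty polybox codes such that V is a cover of W (i.e. W ⊑ V) and δ(V,W) ≤ 4. Then there exists w ∈ W such that one can pass by gluing and cutting from V to a polybox code V̄ which contains w. -/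
/- Common framework: polybox codes over a finite alphabet `S` with a
complementation `c : S → S` (an involution without fixed points). -/

namespace PolyboxPaper

variable {S : Type} [Fintype S] [DecidableEq S] {d : ℕ}

/-- Selectors: choose exactly one letter of each complementary pair. -/
def Sel {S : Type} (c : S → S) : Type := {x : S → Bool // ∀ s, x (c s) = !x s}

noncomputable instance selFintype {S : Type} [Fintype S] [DecidableEq S] (c : S → S) :
    Fintype (Sel c) := by
  classical
  unfold Sel
  infer_instance

/-- Flip the choice at the pair of `u`. -/
def Sel.flip {S : Type} [DecidableEq S] (c : S → S) (hc : ∀ s, c (c s) = s)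
    (u : S) (x : Sel c) : Sel c :=
  ⟨fun t => if t = u ∨ t = c u then !x.1 t else x.1 t, by
    intro s
    have h : (c s = u ∨ c s = c u) ↔ (s = u ∨ s = c u) := by
      constructor
      · rintro (h | h)
        · right; rw [← h, hc]
        · left; rw [← hc s, h, hc]
      · rintro (h | h)
        · right; rw [h]
        · left; rw [h, hc]
    simp only [h]
    split_ifs <;> simp [x.2 s]⟩

theorem Sel.flip_flip {S : Type} [DecidableEq S] (c : S → S) (hc : ∀ s, c (c s) = s)
    (u : S) (x : Sel c) : Sel.flip c hc u (Sel.flip c hc u x) = x := by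
  apply Subtype.ext
  funext t
  simp only [Sel.flip]
  split_ifs <;> simp

theorem Sel.exists_true {S : Type} [Fintype S] [DecidableEq S] (c : S → S)
    (hc : ∀ s, c (c s) = s) (hc' : ∀ s, c s ≠ s) (s : S) : ∃ x : Sel c, x.1 s = true := by
  have e := Fintype.equivFin S
  let x : Sel c := ⟨fun t => decide (e t < e (c t)), by
    intro t
    have hne : e (c t) ≠ e t := fun h => hc' t (e.injective h)
    simp only [hc]
    rcases lt_or_gt_of_ne hne with h | h
    · simp [h, h.le]
    · simp [h, h.le]⟩
  cases h : x.1 s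
  · exact ⟨Sel.flip c hc s x, by simp [Sel.flip, h]⟩
  · exact ⟨x, h⟩

open Classical in
theorem sel_card_half {S : Type} [Fintype S] [DecidableEq S] (c : S → S)
    (hc : ∀ s, c (c s) = s) (s u : S) (h1 : u ≠ s) (h2 : u ≠ c s) :
    ((Finset.univ.filter fun x : Sel c => x.1 s = true ∧ x.1 u = true).card : ℚ)
      = (Finset.univ.filter fun x : Sel c => x.1 s = true).card * (1 / 2) := by
  have hsu : ¬ (s = u ∨ s = c u) := by
    rintro (h | h)
    · exact h1 h.symm
    · exact h2 (by rw [h, hc])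
  have e1 : (Finset.univ.filter fun x : Sel c => x.1 s = true ∧ x.1 u = true).card
      = (Finset.univ.filter fun x : Sel c => x.1 s = true ∧ ¬ x.1 u = true).card := by
    apply Finset.card_bij' (fun x _ => Sel.flip c hc u x) (fun x _ => Sel.flip c hc u x)
    · intro x hx
      simp only [Finset.mem_filter, Finset.mem_univ, true_and] at hx ⊢
      simp [Sel.flip, hsu, hx.1, hx.2]
    · intro x hx
      simp only [Finset.mem_filter, Finset.mem_univ, true_and] at hx ⊢
      simp [Sel.flip, hsu, hx.1, hx.2]
    · intro x _; exact Sel.flip_flip c hc u x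
    · intro x _; exact Sel.flip_flip c hc u x
  have e2 := Finset.card_filter_add_card_filter_not
    (s := Finset.univ.filter fun x : Sel c => x.1 s = true) (fun x => x.1 u = true)
  rw [Finset.filter_filter, Finset.filter_filter] at e2
  have : ((Finset.univ.filter fun x : Sel c => x.1 s = true).card : ℚ)
    = (Finset.univ.filter fun x : Sel c => x.1 s = true ∧ x.1 u = true).card
     + (Finset.univ.filter fun x : Sel c => x.1 s = true ∧ ¬ x.1 u = true).card := by
    exact_mod_cast e2.symm
  rw [this, ← e1]; ring

/-- Positions at which `v` differs from `w`. -/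
def diffSet {S : Type} [DecidableEq S] {d : ℕ} (w v : Fin d → S) : Finset (Fin d) :=
  Finset.univ.filter fun i => v i ≠ w i

theorem mem_diffSet {S : Type} [DecidableEq S] {d : ℕ} (w v : Fin d → S) (i : Fin d) :
    i ∈ diffSet w v ↔ v i ≠ w i := by simp [diffSet]

open Classical in
/-- Covering a word gives a Kraft equality. -/
theorem kraft {S : Type} [Fintype S] [DecidableEq S] (c : S → S)
    (hc : ∀ s, c (c s) = s) (hc' : ∀ s, c s ≠ s) {d : ℕ}
    (V : Finset (Fin d → S)) (hV : IsCode c V) (w : Fin d → S) (hw : CoveredWord c w V) :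
    ∑ v ∈ V.filter (fun v => ¬ Dich c v w), (1 / 2 : ℚ) ^ (diffSet w v).card = 1 := by
  let B : (Fin d → S) → Finset (Fin d → Sel c) := fun v =>
    Fintype.piFinset fun i => Finset.univ.filter fun x : Sel c =>
      x.1 (w i) = true ∧ x.1 (v i) = true
  let A : Finset (Fin d → Sel c) :=
    Fintype.piFinset fun i => Finset.univ.filter fun x : Sel c => x.1 (w i) = true
  have memB : ∀ v x, x ∈ B v ↔ ∀ i, (x i).1 (w i) = true ∧ (x i).1 (v i) = true := by
    intro v x; simp [B, Fintype.mem_piFinset]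
  have memA : ∀ x, x ∈ A ↔ ∀ i, (x i).1 (w i) = true := by
    intro x; simp [A, Fintype.mem_piFinset]
  have hreal : IsRealization c (fun _ : Fin d => Sel c) (fun _ s => {x : Sel c | x.1 s = true}) := by
    intro i s
    refine ⟨Sel.exists_true c hc hc' s, ?_, ?_⟩
    · intro h
      obtain ⟨x, hx⟩ := Sel.exists_true c hc hc' (c s)
      have h4 : x.1 s = true := Set.eq_univ_iff_forall.1 h x
      have := x.2 s
      rw [hx, h4] at this
      simp at this
    · ext x
      simp [x.2 s]
  have hAB : A = (V.filter (fun v => ¬ Dich c v w)).biUnion B := by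
    ext x
    rw [Finset.mem_biUnion]
    constructor
    · intro hx
      rw [memA] at hx
      have hx2 : x ∈ box (fun (_ : Fin d) s => {x : Sel c | x.1 s = true}) w := hx
      have := hw _ _ hreal hx2
      simp only [Set.mem_iUnion] at this
      obtain ⟨v, hv, hxv⟩ := this
      have hxv' : ∀ i, (x i).1 (v i) = true := hxv
      refine ⟨v, Finset.mem_filter.2 ⟨hv, ?_⟩, (memB v x).2 fun i => ⟨hx i, hxv' i⟩⟩
      rintro ⟨i, hi⟩
      have h1 := hxv' i
      rw [hi, (x i).2, hx i] at h1
      simp at h1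
    · rintro ⟨v, _, hx⟩
      exact (memA x).2 fun i => ((memB v x).1 hx i).1
  have hdisj : ∀ v ∈ V.filter (fun v => ¬ Dich c v w), ∀ u ∈ V.filter (fun v => ¬ Dich c v w),
      v ≠ u → Disjoint (B v) (B u) := by
    intro v hv u hu hne
    obtain ⟨i, hi⟩ := hV v (Finset.mem_filter.1 hv).1 u (Finset.mem_filter.1 hu).1 hne
    rw [Finset.disjoint_left]
    intro x hx hx'
    have h1 := ((memB v x).1 hx i).2
    have h2 := ((memB u x).1 hx' i).2
    rw [hi, (x i).2, h2] at h1
    simp at h1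
  have hcard : A.card = ∑ v ∈ V.filter (fun v => ¬ Dich c v w), (B v).card := by
    conv_lhs => rw [hAB]
    exact Finset.card_biUnion hdisj
  have hBcard : ∀ v ∈ V.filter (fun v => ¬ Dich c v w),
      ((B v).card : ℚ) = A.card * (1 / 2 : ℚ) ^ (diffSet w v).card := by
    intro v hv
    have hnd := (Finset.mem_filter.1 hv).2
    simp only [A, B, Fintype.card_piFinset]
    push_cast
    rw [diffSet, ← Finset.prod_const, Finset.prod_filter, ← Finset.prod_mul_distrib]
    apply Finset.prod_congr rfl
    intro i _
    by_cases h : v i = w i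
    · simp [h]
    · rw [if_pos h]
      exact sel_card_half c hc (w i) (v i) h (fun h' => hnd ⟨i, h'⟩)
  have hA0 : (A.card : ℚ) ≠ 0 := by
    have : A.Nonempty := by
      choose x hx using fun i => Sel.exists_true c hc hc' (w i)
      exact ⟨x, (memA x).2 hx⟩
    exact_mod_cast this.card_pos.ne'
  have : (A.card : ℚ) * 1 = A.card *
      ∑ v ∈ V.filter (fun v => ¬ Dich c v w), (1 / 2 : ℚ) ^ (diffSet w v).card := by
    rw [Finset.mul_sum, ← Finset.sum_congr rfl hBcard, mul_one]
    exact_mod_cast hcard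
  exact (mul_left_cancel₀ hA0 this).symm

/-- Dichotomous words which are not dichotomous to `w` are so at common differing position. -/
theorem dich_common {S : Type} [DecidableEq S] (c : S → S)
    (hc : ∀ s, c (c s) = s) {d : ℕ} {w p q : Fin d → S}
    (hp : ¬ Dich c p w) (hq : ¬ Dich c q w) (h : Dich c p q) :
    ∃ i, i ∈ diffSet w p ∧ i ∈ diffSet w q ∧ q i = c (p i) := by
  obtain ⟨i, hi⟩ := h
  refine ⟨i, (mem_diffSet ..).2 ?_, (mem_diffSet ..).2 ?_, by rw [hi, hc]⟩
  · intro h; exact hq ⟨i, by rw [← h, hi, hc]⟩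
  · intro h; exact hp ⟨i, by rw [hi, h]⟩

/-- Words agreeing at all but one of the positions in their supports are twins. -/
theorem twin_of_agree {S : Type} [DecidableEq S] (c : S → S)
    (hc : ∀ s, c (c s) = s) (hc' : ∀ s, c s ≠ s) {d : ℕ} {w p q : Fin d → S}
    (hp : ¬ Dich c p w) (hq : ¬ Dich c q w) (h : Dich c p q)
    (E : Finset (Fin d)) (hE : ∀ i ∈ E, p i = q i ∧ p i ≠ w i)
    (h1 : (diffSet w p).card ≤ E.card + 1) (h2 : (diffSet w q).card ≤ E.card + 1) :
    ∃ i, TwinPair c p q i := by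
  obtain ⟨l, hlp, hlq, hl⟩ := dich_common c hc hp hq h
  have hlE : l ∉ E := by
    intro hh
    exact hc' (p l) (by rw [← hl, (hE l hh).1])
  have e1 : insert l E = diffSet w p := by
    apply Finset.eq_of_subset_of_card_le
    · intro i hi
      rcases Finset.mem_insert.1 hi with rfl | hi
      · exact hlp
      · exact (mem_diffSet ..).2 (hE i hi).2
    · rw [Finset.card_insert_of_notMem hlE]; exact h1
  have e2 : insert l E = diffSet w q := by
    apply Finset.eq_of_subset_of_card_le
    · intro i hi
      rcases Finset.mem_insert.1 hi with rfl | hi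
      · exact hlq
      · exact (mem_diffSet ..).2 (by rw [← (hE i hi).1]; exact (hE i hi).2)
    · rw [Finset.card_insert_of_notMem hlE]; exact h2
  refine ⟨l, by rw [hl, hc], ?_⟩
  intro j hj
  by_cases hjE : j ∈ E
  · exact (hE j hjE).1
  · have hn : j ∉ insert l E := by simp [hj, hjE]
    have a1 : j ∉ diffSet w p := by rw [← e1]; exact hn
    have a2 : j ∉ diffSet w q := by rw [← e2]; exact hn
    rw [mem_diffSet, not_not] at a1 a2
    rw [a1, a2]

theorem half_pow_cases (k : ℕ) (hk : 2 ≤ k) :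
    (k = 2 ∧ (1 / 2 : ℚ) ^ k = 1 / 4) ∨ (k = 3 ∧ (1 / 2 : ℚ) ^ k = 1 / 8) ∨
      (4 ≤ k ∧ 0 < (1 / 2 : ℚ) ^ k ∧ (1 / 2 : ℚ) ^ k ≤ 1 / 16) := by
  rcases Nat.lt_or_ge k 4 with h | h
  · interval_cases k <;> norm_num
  · right; right
    refine ⟨h, by positivity, ?_⟩
    calc (1 / 2 : ℚ) ^ k ≤ (1 / 2) ^ 4 := pow_le_pow_of_le_one (by norm_num) (by norm_num) h
      _ = 1 / 16 := by norm_num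

/-- The chain `1, 2, 3, 3`. -/
theorem twin_chain {S : Type} [DecidableEq S] (c : S → S)
    (hc : ∀ s, c (c s) = s) (hc' : ∀ s, c s ≠ s) {d : ℕ} {w q r s : Fin d → S} (i : Fin d) (a : S)
    (ha : a ≠ w i) (hq : ¬ Dich c q w) (hr : ¬ Dich c r w) (hs : ¬ Dich c s w)
    (hqr : Dich c q r) (hqs : Dich c q s) (hrs : Dich c r s)
    (qi : q i = a) (ri : r i = a) (si : s i = a)
    (kq : (diffSet w q).card = 2) (kr : (diffSet w r).card = 3) (ks : (diffSet w s).card = 3) :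
    ∃ l, TwinPair c r s l := by
  obtain ⟨j, j1, j2, j3⟩ := dich_common c hc hq hr hqr
  obtain ⟨k, k1, k2, k3⟩ := dich_common c hc hq hs hqs
  have hji : j ≠ i := by
    rintro rfl
    rw [qi, ri] at j3
    exact hc' a j3.symm
  have hki : k ≠ i := by
    rintro rfl
    rw [qi, si] at k3
    exact hc' a k3.symm
  have hjk : j = k := by
    by_contra hne
    have hsub : ({i, j, k} : Finset (Fin d)) ⊆ diffSet w q := by
      intro x hx
      simp only [Finset.mem_insert, Finset.mem_singleton] at hx
      rcases hx with rfl | rfl | rfl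
      · rw [mem_diffSet, qi]; exact ha
      · exact j1
      · exact k1
    have h3 : ({i, j, k} : Finset (Fin d)).card = 3 :=
      Finset.card_eq_three.2 ⟨i, j, k, hji.symm, hki.symm, hne, rfl⟩
    have := Finset.card_le_card hsub
    omega
  subst hjk
  have h2 : ({i, j} : Finset (Fin d)).card = 2 := Finset.card_pair hji.symm
  refine twin_of_agree c hc hc' hr hs hrs {i, j} ?_ (by omega) (by omega)
  intro x hx
  simp only [Finset.mem_insert, Finset.mem_singleton] at hx
  rcases hx with rfl | rfl
  · exact ⟨by rw [ri, si], by rw [ri]; exact ha⟩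
  · exact ⟨by rw [j3, k3], (mem_diffSet ..).1 j2⟩

theorem exists_twin {S : Type} [DecidableEq S] (c : S → S)
    (hc : ∀ s, c (c s) = s) (hc' : ∀ s, c s ≠ s) {d : ℕ} (w : Fin d → S)
    (C : Finset (Fin d → S)) (hC : IsCode c C) (hn : ∀ v ∈ C, ¬ Dich c v w)
    (hsum : ∑ v ∈ C, (1 / 2 : ℚ) ^ (diffSet w v).card = 1)
    (h2 : 2 ≤ C.card) (h4 : C.card ≤ 4) :
    ∃ p ∈ C, ∃ q ∈ C, ∃ i, TwinPair c p q i := by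
  have hpos : ∀ v ∈ C, 1 ≤ (diffSet w v).card := by
    intro v hv
    by_contra hcon
    have h0 : (diffSet w v).card = 0 := by omega
    obtain ⟨u, hu, huv⟩ := Finset.exists_mem_ne (by omega : 1 < C.card) v
    obtain ⟨i, -, hi, -⟩ := dich_common c hc (hn u hu) (hn v hv) (hC u hu v hv huv)
    rw [Finset.card_eq_zero] at h0
    rw [h0] at hi
    simp at hi
  by_cases h1 : ∃ p ∈ C, (diffSet w p).card = 1
  · obtain ⟨p, hp, hp1⟩ := h1
    by_cases h11 : ∃ q ∈ C, q ≠ p ∧ (diffSet w q).card = 1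
    · obtain ⟨q, hq, hqp, hq1⟩ := h11
      exact ⟨p, hp, q, hq, twin_of_agree c hc hc' (hn p hp) (hn q hq) (hC p hp q hq hqp.symm) ∅
        (by simp) (by simp [hp1]) (by simp [hq1])⟩
    · push Not at h11
      obtain ⟨i, hi⟩ := Finset.card_eq_one.1 hp1
      have hother : ∀ q ∈ C.erase p, q ∈ C ∧ q i = c (p i) ∧ ¬ Dich c q w ∧
          2 ≤ (diffSet w q).card := by
        intro q hq
        obtain ⟨hqp, hqC⟩ := Finset.mem_erase.1 hq
        obtain ⟨j, j1, j2, j3⟩ := dich_common c hc (hn p hp) (hn q hqC)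
          (hC p hp q hqC hqp.symm)
        rw [hi, Finset.mem_singleton] at j1
        subst j1
        have := hpos q hqC
        have := h11 q hqC hqp
        exact ⟨hqC, j3, hn q hqC, by omega⟩
      have ha : c (p i) ≠ w i := fun h => hn p hp ⟨i, by rw [← h, hc]⟩
      rw [← Finset.add_sum_erase C _ hp, hp1] at hsum
      have hcd := Finset.card_erase_of_mem hp
      have hcases : (C.erase p).card = 1 ∨ (C.erase p).card = 2 ∨ (C.erase p).card = 3 := by omega
      rcases hcases with hk | hk | hk
      · obtain ⟨q, hq⟩ := Finset.card_eq_one.1 hk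
        rw [hq] at hsum hother
        obtain ⟨q1, q2, q3, q4⟩ := hother q (by simp)
        rw [Finset.sum_singleton] at hsum
        exfalso
        rcases half_pow_cases _ q4 with ⟨_, h⟩ | ⟨_, h⟩ | ⟨_, _, h⟩ <;> linarith
      · obtain ⟨q, r, hqr, hq⟩ := Finset.card_eq_two.1 hk
        rw [hq] at hsum hother
        obtain ⟨q1, q2, q3, q4⟩ := hother q (by simp)
        obtain ⟨r1, r2, r3, r4⟩ := hother r (by simp)
        rw [Finset.sum_pair hqr] at hsum
        have : (diffSet w q).card = 2 ∧ (diffSet w r).card = 2 := by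
          rcases half_pow_cases _ q4 with ⟨_, h⟩ | ⟨_, h⟩ | ⟨_, _, h⟩ <;>
          rcases half_pow_cases _ r4 with ⟨_, h'⟩ | ⟨_, h'⟩ | ⟨_, _, h'⟩ <;>
          first
            | exact ⟨by assumption, by assumption⟩
            | (exfalso; linarith)
        refine ⟨q, q1, r, r1, twin_of_agree c hc hc' q3 r3 (hC q q1 r r1 hqr) {i} ?_ ?_ ?_⟩
        · intro x hx
          rw [Finset.mem_singleton] at hx
          subst hx
          exact ⟨by rw [q2, r2], by rw [q2]; exact ha⟩
        · simp [this.1]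
        · simp [this.2]
      · obtain ⟨q, r, s, hqr, hqs, hrs, hq⟩ := Finset.card_eq_three.1 hk
        rw [hq] at hsum hother
        obtain ⟨q1, q2, q3, q4⟩ := hother q (by simp)
        obtain ⟨r1, r2, r3, r4⟩ := hother r (by simp)
        obtain ⟨s1, s2, s3, s4⟩ := hother s (by simp)
        rw [Finset.sum_insert (by simp [hqr, hqs]), Finset.sum_pair hrs] at hsum
        have : ((diffSet w q).card = 2 ∧ (diffSet w r).card = 3 ∧ (diffSet w s).card = 3) ∨
            ((diffSet w q).card = 3 ∧ (diffSet w r).card = 2 ∧ (diffSet w s).card = 3) ∨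
            ((diffSet w q).card = 3 ∧ (diffSet w r).card = 3 ∧ (diffSet w s).card = 2) := by
          rcases half_pow_cases _ q4 with ⟨_, h⟩ | ⟨_, h⟩ | ⟨_, _, h⟩ <;>
          rcases half_pow_cases _ r4 with ⟨_, h'⟩ | ⟨_, h'⟩ | ⟨_, _, h'⟩ <;>
          rcases half_pow_cases _ s4 with ⟨_, h''⟩ | ⟨_, h''⟩ | ⟨_, _, h''⟩ <;>
          first
            | (exfalso; linarith)
            | omega
        have dqr := hC q q1 r r1 hqr
        have dqs := hC q q1 s s1 hqs
        have drs := hC r r1 s s1 hrs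
        have drq := hC r r1 q q1 hqr.symm
        have dsq := hC s s1 q q1 hqs.symm
        have dsr := hC s s1 r r1 hrs.symm
        rcases this with ⟨k1, k2, k3⟩ | ⟨k1, k2, k3⟩ | ⟨k1, k2, k3⟩
        · exact ⟨r, r1, s, s1, twin_chain c hc hc' i _ ha q3 r3 s3 dqr dqs drs q2 r2 s2 k1 k2 k3⟩
        · exact ⟨q, q1, s, s1, twin_chain c hc hc' i _ ha r3 q3 s3 drq drs dqs r2 q2 s2 k2 k1 k3⟩
        · exact ⟨q, q1, r, r1, twin_chain c hc hc' i _ ha s3 q3 r3 dsq dsr dqr s2 q2 r2 k3 k1 k2⟩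
  · push Not at h1
    have hge : ∀ v ∈ C, 2 ≤ (diffSet w v).card := by
      intro v hv
      have := hpos v hv
      have := h1 v hv
      omega
    have hle : ∀ v ∈ C, (1 / 2 : ℚ) ^ (diffSet w v).card ≤ 1 / 4 := by
      intro v hv
      rcases half_pow_cases _ (hge v hv) with ⟨_, h⟩ | ⟨_, h⟩ | ⟨_, _, h⟩ <;> linarith
    have hall : C.card = 4 ∧ ∀ v ∈ C, (diffSet w v).card = 2 := by
      have hs := Finset.sum_le_card_nsmul C _ _ hle
      rw [hsum, nsmul_eq_mul] at hs
      have h4' : (4 : ℚ) ≤ C.card := by linarith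
      have h4'' : 4 ≤ C.card := by exact_mod_cast h4'
      have hcd : C.card = 4 := by omega
      refine ⟨hcd, ?_⟩
      intro v hv
      have hs' : ∑ v ∈ C, (1 / 2 : ℚ) ^ (diffSet w v).card = ∑ v ∈ C, (1 / 4 : ℚ) := by
        rw [hsum, Finset.sum_const, hcd]; norm_num
      have := (Finset.sum_eq_sum_iff_of_le hle).1 hs' v hv
      rcases half_pow_cases _ (hge v hv) with ⟨h, _⟩ | ⟨_, h⟩ | ⟨_, _, h⟩
      · exact h
      · linarith
      · linarith
    obtain ⟨hcd, hall⟩ := hall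
    have hne : C.Nonempty := Finset.card_pos.1 (by omega)
    obtain ⟨p, hp⟩ := hne
    -- choose for each other word a position at which it is dichotomous to `p`
    have hch : ∀ q ∈ C.erase p, ∃ i ∈ diffSet w p, i ∈ diffSet w q ∧ q i = c (p i) := by
      intro q hq
      obtain ⟨hqp, hqC⟩ := Finset.mem_erase.1 hq
      exact dich_common c hc (hn p hp) (hn q hqC) (hC p hp q hqC hqp.symm)
    have hFin : Nonempty (Fin d) := by
      obtain ⟨i, _⟩ := Finset.card_pos.1 (hpos p hp)
      exact ⟨i⟩
    choose! g hg1 hg2 hg3 using hch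
    have hlt : (diffSet w p).card < (C.erase p).card := by
      rw [Finset.card_erase_of_mem hp, hall p hp, hcd]; norm_num
    obtain ⟨q, hq, r, hr, hqr, hgqr⟩ :=
      Finset.exists_ne_map_eq_of_card_lt_of_maps_to hlt hg1
    have hqC := (Finset.mem_erase.1 hq).2
    have hrC := (Finset.mem_erase.1 hr).2
    refine ⟨q, hqC, r, hrC, twin_of_agree c hc hc' (hn q hqC) (hn r hrC)
      (hC q hqC r hrC hqr) {g q} ?_ ?_ ?_⟩
    · intro x hx
      rw [Finset.mem_singleton] at hx
      subst hx
      refine ⟨?_, (mem_diffSet ..).1 (hg2 q hq)⟩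
      rw [hg3 q hq, hgqr, hg3 r hr]
    · simp [hall q hqC]
    · simp [hall r hrC]

theorem reach_word {S : Type} [Fintype S] [DecidableEq S] (c : S → S)
    (hc : ∀ s, c (c s) = s) (hc' : ∀ s, c s ≠ s) {d : ℕ} (w : Fin d → S) (n : ℕ) :
    ∀ V : Finset (Fin d → S), IsCode c V → CoveredWord c w V →
      (V.filter fun v => ¬ Dich c v w).card = n → n ≤ 4 →
      ∃ V', GC c V V' ∧ w ∈ V' := by
  induction n using Nat.strong_induction_on with
  | _ n ih =>
  intro V hV hw hcard h4
  have hk := kraft c hc hc' V hV w hw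
  rcases Nat.lt_or_ge n 2 with hn2 | hn2
  · have hn : n = 0 ∨ n = 1 := by omega
    rcases hn with rfl | rfl
    · rw [Finset.card_eq_zero] at hcard
      rw [hcard] at hk
      simp at hk
    · obtain ⟨v, hv⟩ := Finset.card_eq_one.1 hcard
      rw [hv, Finset.sum_singleton] at hk
      have h0 : (diffSet w v).card = 0 := by
        by_contra h
        have : (1 / 2 : ℚ) ^ (diffSet w v).card < 1 :=
          pow_lt_one₀ (by norm_num) (by norm_num) h
        linarith
      have hvw : v = w := by
        funext i
        by_contra h
        have := (mem_diffSet w v i).2 h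
        rw [Finset.card_eq_zero.1 h0] at this
        simp at this
      have hvV : v ∈ V := (Finset.mem_filter.1 (by rw [hv]; simp : v ∈ V.filter _)).1
      exact ⟨V, Relation.ReflTransGen.refl, hvw ▸ hvV⟩
  · obtain ⟨v, hv, u, hu, i, ht⟩ := exists_twin c hc hc' w (V.filter fun v => ¬ Dich c v w)
      (fun a ha b hb => hV a (Finset.mem_filter.1 ha).1 b (Finset.mem_filter.1 hb).1)
      (fun a ha => (Finset.mem_filter.1 ha).2) hk (by omega) (by omega)
    have hvV := (Finset.mem_filter.1 hv).1
    have huV := (Finset.mem_filter.1 hu).1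
    have hvu : v ≠ u := by
      rintro rfl
      exact hc' _ ht.1.symm
    set q := Function.update v i (w i) with hq
    set t := Function.update v i (c (w i)) with htt
    have qi : q i = w i := by simp [hq]
    have ti : t i = c (w i) := by simp [htt]
    have qj : ∀ j, j ≠ i → q j = v j := fun j hj => by simp [hq, hj]
    have tj : ∀ j, j ≠ i → t j = v j := fun j hj => by simp [htt, hj]
    have htw : Dich c t w := ⟨i, ti⟩
    set V1 := (V \ {v, u}) ∪ {q, t} with hV1
    have memV1 : ∀ x, x ∈ V1 ↔ (x ∈ V ∧ x ≠ v ∧ x ≠ u) ∨ x = q ∨ x = t := by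
      intro x; simp [hV1]; tauto
    have hstep : GCStep c V V1 :=
      ⟨v, u, q, t, i, hvV, huV, ht, ⟨by rw [qi, ti, hc], fun j hj => by rw [qj j hj, tj j hj]⟩,
        qj, rfl⟩
    have hsymm : ∀ x y : Fin d → S, Dich c x y → Dich c y x := by
      rintro x y ⟨j, hj⟩
      exact ⟨j, by rw [hj, hc]⟩
    have hold : ∀ x ∈ V, x ≠ v → x ≠ u → ∀ z : Fin d → S, (∀ j, j ≠ i → z j = v j) →
        Dich c x z := by
      intro x hx hxv hxu z hz
      obtain ⟨j, hj⟩ := hV x hx v hvV hxv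
      obtain ⟨k, hk⟩ := hV x hx u huV hxu
      by_cases hji : j = i
      · by_cases hki : k = i
        · subst hji; subst hki
          exfalso
          have h1 := ht.1
          rw [← hk, hj] at h1
          exact hc' _ h1.symm
        · exact ⟨k, by rw [hk, hz k hki, ht.2 k hki]⟩
      · exact ⟨j, by rw [hj, hz j hji]⟩
    have hqt : Dich c q t := ⟨i, by rw [qi, ti, hc]⟩
    have hcode : IsCode c V1 := by
      intro x hx y hy hxy
      rcases (memV1 x).1 hx with ⟨x1, x2, x3⟩ | rfl | rfl
      · rcases (memV1 y).1 hy with ⟨y1, y2, y3⟩ | rfl | rfl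
        · exact hV x x1 y y1 hxy
        · exact hold x x1 x2 x3 _ qj
        · exact hold x x1 x2 x3 _ tj
      · rcases (memV1 y).1 hy with ⟨y1, y2, y3⟩ | h | h
        · exact hsymm _ _ (hold y y1 y2 y3 _ qj)
        · exact absurd h.symm hxy
        · rw [h]; exact hqt
      · rcases (memV1 y).1 hy with ⟨y1, y2, y3⟩ | h | h
        · exact hsymm _ _ (hold y y1 y2 y3 _ tj)
        · rw [h]; exact hsymm _ _ hqt
        · exact absurd h.symm hxy
    have hcov : CoveredWord c w V1 := by
      intro X f hf x hx
      have := hw X f hf hx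
      simp only [Set.mem_iUnion] at this ⊢
      obtain ⟨y, hy, hxy⟩ := this
      by_cases hyy : y ≠ v ∧ y ≠ u
      · exact ⟨y, (memV1 y).2 (Or.inl ⟨hy, hyy.1, hyy.2⟩), hxy⟩
      · have hyj : ∀ j, j ≠ i → y j = v j := by
          intro j hj
          by_cases h : y = v
          · rw [h]
          · have : y = u := by
              by_contra h'
              exact hyy ⟨h, h'⟩
            rw [this, ht.2 j hj]
        refine ⟨q, (memV1 q).2 (Or.inr (Or.inl rfl)), ?_⟩
        intro j
        by_cases hj : j = i
        · subst hj; rw [qi]; exact hx j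
        · rw [qj j hj, ← hyj j hj]; exact hxy j
    have hlt : (V1.filter fun v => ¬ Dich c v w).card < n := by
      have hsub : (V1.filter fun v => ¬ Dich c v w) ⊆
          insert q (((V.filter fun v => ¬ Dich c v w).erase v).erase u) := by
        intro x hx
        obtain ⟨x1, x2⟩ := Finset.mem_filter.1 hx
        rcases (memV1 x).1 x1 with ⟨y1, y2, y3⟩ | h | h
        · simp [y1, y2, y3, x2]
        · simp [h]
        · exact absurd (h ▸ htw) x2
      have h1 := Finset.card_le_card hsub
      have h2 := Finset.card_insert_le q (((V.filter fun v => ¬ Dich c v w).erase v).erase u)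
      rw [Finset.card_erase_of_mem (Finset.mem_erase.2 ⟨hvu.symm, hu⟩),
        Finset.card_erase_of_mem hv, hcard] at h2
      omega
    obtain ⟨V', h1, h2⟩ := ih _ hlt V1 hcode hcov rfl (by omega)
    exact ⟨V', Relation.ReflTransGen.head hstep h1, h2⟩

/-- Corollary "del4" of the paper. -/
theorem low_density_cover_reaches_some_word
    {S : Type} [Fintype S] [DecidableEq S] (c : S → S)
    (hc : ∀ s, c (c s) = s) (hc' : ∀ s, c s ≠ s) {d : ℕ}
    (V W : Finset (Fin d → S)) (hV : IsCode c V) (hW : IsCode c W)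
    (hVne : V.Nonempty) (hWne : W.Nonempty)
    (hcov : Covered c W V) (hdelta : delta c V W ≤ 4) :
    ∃ w ∈ W, ∃ V' : Finset (Fin d → S), GC c V V' ∧ w ∈ V' := by
  obtain ⟨w, hw, hwe⟩ := Finset.exists_mem_eq_inf W hWne
    (fun w => ((V.filter fun v => ¬ Dich c v w).card : ℕ∞))
  have h4 : (V.filter fun v => ¬ Dich c v w).card ≤ 4 := by
    unfold delta at hdelta
    rw [hwe] at hdelta
    exact_mod_cast hdelta
  obtain ⟨V', h1, h2⟩ := reach_word c hc hc' w _ V hV (hcov w hw) rfl h4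
  exact ⟨w, hw, V', h1, h2⟩

end PolyboxPaper
end

section
/- Let S = {a,a',b,b'} be a four-letter alphabet with complementation, let V ⊆ S^d be a polybox code, i ∈ [d], and write V^{i,s} = {v ∈ V : v_i = s}. Assume V^{i,a'} ∪ V^{i,b} ∪ V^{i,b'} ≠ ∅ and |V^{i,a'}| + |V^{i,b}| + |V^{i,b'}| ≤ 4, and let W be a nonempty polybox code equivalent to V. Then there exists a code W̄ obtained from W by gluing and cutting such that Δ(V, W̄) ≤ 4. -/
/- Common framework: polybox codes over a finite alphabet `S` with a
complementation `c : S → S` (an involution without fixed points). -/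

namespace PolyboxPaper

variable {S : Type} [Fintype S] [DecidableEq S] {d : ℕ}

/-! ### Auxiliary material for the proof -/

/-- Abstract satisfaction relation between states and letters. -/
structure IsSat (c : S → S) (sat : Bool × Bool → S → Bool) : Prop where
  compl : ∀ φ s, sat φ (c s) = !sat φ s
  common : ∀ s t, s ≠ c t → ∃ φ, sat φ s = true ∧ sat φ t = true
  card : ∀ s, (Finset.univ.filter fun φ => sat φ s = true).card = 2

theorem exists_sat (c : S → S) (hc : ∀ s, c (c s) = s) (hc' : ∀ s, c s ≠ s)
    (a b : S) (hS : ∀ s : S, s = a ∨ s = c a ∨ s = b ∨ s = c b)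
    (hba : b ≠ a) (hba' : b ≠ c a) : ∃ sat, IsSat c sat := by
  have h1 : c b ≠ a := fun h => hba' (by rw [← h, hc])
  have h2 : c b ≠ c a := fun h => hba (by rw [← hc b, h, hc])
  have h3 := hc' a
  have h4 := hc' b
  let sat : Bool × Bool → S → Bool := fun φ s =>
    if s = a then φ.1 else if s = c a then !φ.1 else if s = b then φ.2 else !φ.2
  have sa : ∀ φ, sat φ a = φ.1 := fun φ => by simp [sat]
  have sa' : ∀ φ, sat φ (c a) = !φ.1 := fun φ => by simp [sat, h3]
  have sb : ∀ φ, sat φ b = φ.2 := fun φ => by simp [sat, hba, hba']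
  have sb' : ∀ φ, sat φ (c b) = !φ.2 := fun φ => by simp [sat, h1, h2, h4]
  refine ⟨sat, ?_, ?_, ?_⟩
  · intro φ s
    rcases hS s with rfl | rfl | rfl | rfl <;> simp [sa, sa', sb, sb', hc]
  · intro s t hst
    rcases hS s with rfl | rfl | rfl | rfl <;> rcases hS t with rfl | rfl | rfl | rfl <;>
      first
      | exact absurd rfl hst
      | exact absurd (hc _).symm hst
      | (simp only [sa, sa', sb, sb']; decide)
  · intro s
    rcases hS s with rfl | rfl | rfl | rfl <;> simp only [sa, sa', sb, sb'] <;> decide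

/-- A point lies in the box of a word. -/
def Bx (sat : Bool × Bool → S → Bool) (x : Fin d → Bool × Bool) (p : Fin d → S) : Prop :=
  ∀ k, sat (x k) (p k) = true

theorem cov_of_coveredWord (c : S → S) (hc' : ∀ s, c s ≠ s) {sat : Bool × Bool → S → Bool}
    (hs : IsSat c sat) {w : Fin d → S} {V : Finset (Fin d → S)} (h : CoveredWord c w V)
    (x : Fin d → Bool × Bool) (hx : Bx sat x w) : ∃ p ∈ V, Bx sat x p := by
  have := h (fun _ => Bool × Bool) (fun _ s => {φ | sat φ s = true}) (by
    intro i s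
    refine ⟨?_, ?_, ?_⟩
    · obtain ⟨φ, h1, _⟩ := hs.common s s (hc' s).symm
      exact ⟨φ, h1⟩
    · intro hu; dsimp only at hu
      obtain ⟨φ, h1, _⟩ := hs.common (c s) (c s) (hc' (c s)).symm
      have h2 : φ ∈ {φ | sat φ s = true} := by rw [hu]; trivial
      rw [hs.compl] at h1
      simp at h1 h2
      simp [h1] at h2
    · ext φ
      simp [hs.compl])
  have h2 := this (show x ∈ box _ w from hx)
  simp only [Set.mem_iUnion] at h2
  obtain ⟨p, hp, hx'⟩ := h2
  exact ⟨p, hp, hx'⟩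

theorem not_dich_of_common {c : S → S} {sat : Bool × Bool → S → Bool}
    (hs : IsSat c sat) {v w : Fin d → S} {x : Fin d → Bool × Bool}
    (hv : Bx sat x v) (hw : Bx sat x w) : ¬ Dich c v w := by
  rintro ⟨k, hk⟩
  have h1 := hv k
  have h2 := hw k
  rw [hk, hs.compl, h2] at h1
  simp at h1

theorem eq_of_common {c : S → S} {sat : Bool × Bool → S → Bool}
    (hs : IsSat c sat) {V : Finset (Fin d → S)} (hV : IsCode c V) {v w : Fin d → S}
    (hvV : v ∈ V) (hwV : w ∈ V) {x : Fin d → Bool × Bool}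
    (hv : Bx sat x v) (hw : Bx sat x w) : v = w := by
  by_contra hne
  exact not_dich_of_common hs hv hw (hV v hvV w hwV hne)

theorem exists_common {c : S → S} {sat : Bool × Bool → S → Bool}
    (hs : IsSat c sat) {v w : Fin d → S} (h : ¬ Dich c v w) :
    ∃ x, Bx sat x v ∧ Bx sat x w := by
  have : ∀ k, ∃ φ, sat φ (v k) = true ∧ sat φ (w k) = true := fun k =>
    hs.common _ _ (fun hk => h ⟨k, hk⟩)
  choose x hx using this
  exact ⟨x, fun k => (hx k).1, fun k => (hx k).2⟩

theorem bx_update {sat : Bool × Bool → S → Bool} {x : Fin d → Bool × Bool} {p : Fin d → S}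
    {i : Fin d} {ψ : Bool × Bool} :
    Bx sat (Function.update x i ψ) p ↔ (∀ k, k ≠ i → sat (x k) (p k) = true) ∧
      sat ψ (p i) = true := by
  constructor
  · intro h
    refine ⟨fun k hk => ?_, ?_⟩
    · have := h k
      rwa [Function.update_of_ne hk] at this
    · have := h i
      rwa [Function.update_self] at this
  · rintro ⟨h1, h2⟩ k
    by_cases hk : k = i
    · subst hk
      rwa [Function.update_self]
    · rw [Function.update_of_ne hk]
      exact h1 k hk

/-- Comparison of cardinalities by counting points in a slice. -/
theorem card_le_of_slice {c : S → S} {sat : Bool × Bool → S → Bool}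
    (hs : IsSat c sat) {A B : Finset (Fin d → S)} (hB : IsCode c B) (i : Fin d)
    (σ : Bool × Bool) (hBσ : ∀ p ∈ B, sat σ (p i) = true)
    (hcov : ∀ x : Fin d → Bool × Bool, x i = σ → (∃ p ∈ B, Bx sat x p) → ∃ p ∈ A, Bx sat x p) :
    B.card ≤ A.card := by
  classical
  let G : (Fin d → S) → Finset (Fin d → Bool × Bool) := fun p =>
    Fintype.piFinset fun k => if k = i then {σ} else Finset.univ.filter fun φ => sat φ (p k) = true
  let N : ℕ := ∏ k : Fin d, if k = i then 1 else 2
  have hG : ∀ p, (G p).card = N := by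
    intro p
    simp only [G, N, Fintype.card_piFinset]
    refine Finset.prod_congr rfl fun k _ => ?_
    split_ifs
    · simp
    · exact hs.card _
  have hN : 0 < N := Finset.prod_pos fun k _ => by split_ifs <;> norm_num
  have hmem : ∀ p x, x ∈ G p ↔ x i = σ ∧ ∀ k, k ≠ i → sat (x k) (p k) = true := by
    intro p x
    simp only [G, Fintype.mem_piFinset]
    constructor
    · intro h
      refine ⟨by simpa using h i, fun k hk => by simpa [hk] using h k⟩
    · rintro ⟨h1, h2⟩ k
      by_cases hk : k = i
      · subst hk; simp [h1]
      · simpa [hk] using h2 k hk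
  have hbx : ∀ p ∈ B, ∀ x ∈ G p, Bx sat x p := by
    intro p hp x hx k
    obtain ⟨h1, h2⟩ := (hmem p x).1 hx
    by_cases hk : k = i
    · subst hk; rw [h1]; exact hBσ p hp
    · exact h2 k hk
  have h1 : (B.biUnion G).card = B.card * N := by
    rw [Finset.card_biUnion]
    · simp [hG]
    · intro p hp q hq hpq
      rw [Function.onFun, Finset.disjoint_left]
      intro x hx hx'
      exact hpq (eq_of_common hs hB hp hq (hbx p hp x hx) (hbx q hq x hx'))
  have h2 : (A.biUnion G).card ≤ A.card * N :=
    Finset.card_biUnion_le_card_mul _ _ _ fun p _ => (hG p).le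
  have h3 : B.biUnion G ⊆ A.biUnion G := by
    intro x hx
    obtain ⟨p, hp, hxp⟩ := Finset.mem_biUnion.1 hx
    have hxi := ((hmem p x).1 hxp).1
    obtain ⟨q, hq, hxq⟩ := hcov x hxi ⟨p, hp, hbx p hp x hxp⟩
    exact Finset.mem_biUnion.2 ⟨q, hq, (hmem q x).2 ⟨hxi, fun k _ => hxq k⟩⟩
  have h4 := Finset.card_le_card h3
  exact Nat.le_of_mul_le_mul_right (h1 ▸ h4.trans h2) hN

/-- A relative partition of a word into two to four words contains a twin pair. -/
theorem exists_twin_s8 (c : S → S) (hc : ∀ s, c (c s) = s) (v : Fin d → S)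
    (h4 : ∀ r s t : S, s ≠ r → s ≠ c r → t ≠ r → t ≠ c r → s = t ∨ s = c t)
    (hex : ∀ r : S, ∃ s, s ≠ r ∧ s ≠ c r) (hc' : ∀ s, c s ≠ s) (n : ℕ) :
    ∀ (C : Finset (Fin d → S)) (u : Fin d → S), C.card = n → 2 ≤ n → n ≤ 4 → IsCode c C →
      (∀ p ∈ C, ∀ k, p k ≠ c (v k)) → (∀ p ∈ C, ∀ k, u k ≠ v k → p k = u k) →
      (∀ k, u k ≠ c (v k)) →
      (∀ x : Fin d → S, (∀ k, x k ≠ v k ∧ x k ≠ c (v k)) → (∀ k, u k = v k ∨ u k = x k) →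
        ∃ p ∈ C, ∀ k, p k = v k ∨ p k = x k) →
      ∃ p ∈ C, ∃ q ∈ C, ∃ j, TwinPair c p q j := by
  classical
  have hinj : ∀ s t, c s = c t → s = t := fun s t h => by rw [← hc s, h, hc]
  -- points extending given data
  have hpt : ∀ p : Fin d → S, (∀ k, p k ≠ c (v k)) → ∃ x : Fin d → S,
      (∀ k, x k ≠ v k ∧ x k ≠ c (v k)) ∧ ∀ k, p k = v k ∨ p k = x k := by
    intro p hp
    choose t ht using hex
    refine ⟨fun k => if p k = v k then t (v k) else p k, fun k => ?_, fun k => ?_⟩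
    · dsimp only
      split_ifs with h
      · exact ht (v k)
      · exact ⟨h, hp k⟩
    · dsimp only
      split_ifs with h
      · exact Or.inl h
      · exact Or.inr rfl
  induction n using Nat.strong_induction_on with
  | _ n ih =>
  intro C u hCn hn2 hn4 hC hCv hCu huv hcov
  -- a common point of two words forces equality
  have hcommon : ∀ p ∈ C, ∀ q ∈ C, ∀ x : Fin d → S, (∀ k, x k ≠ v k ∧ x k ≠ c (v k)) →
      (∀ k, p k = v k ∨ p k = x k) → (∀ k, q k = v k ∨ q k = x k) → p = q := by
    intro p hp q hq x hx hpx hqx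
    by_contra hne
    obtain ⟨k, hk⟩ := hC p hp q hq hne
    have := hx k
    have hp1 := hCv p hp k
    have hq1 := hCv q hq k
    rcases hpx k with h1 | h1 <;> rcases hqx k with h2 | h2
    · rw [h1, h2] at hk; exact hc' _ hk.symm
    · rw [h1] at hk
      exact hq1 (by rw [hk, hc])
    · rw [h2] at hk; exact hp1 hk
    · rw [h1, h2] at hk; exact hc' _ hk.symm
  -- the one-word case
  have key : ∀ p ∈ C, ∀ q ∈ C, ∀ j, p j = c (q j) → p j ≠ v j → q j ≠ v j →
      (∀ r ∈ C, r j = p j → r = p) → 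
      ∃ p ∈ C, ∃ q ∈ C, ∃ j, TwinPair c p q j := by
    intro p hp q hq j hpq hpj hqj huniq
    -- words on the opposite side
    let C1 := C.filter fun r => r j = q j
    let u' : Fin d → S := Function.update p j (q j)
    have hu'j : u' j = q j := Function.update_self ..
    have hu'k : ∀ k, k ≠ j → u' k = p k := fun k hk => Function.update_of_ne hk ..
    have hne : p j ≠ q j := by rw [hpq]; exact hc' _
    have hqpc : q j = c (p j) := by rw [hpq, hc]
    -- flip
    have hcov' : ∀ x : Fin d → S, (∀ k, x k ≠ v k ∧ x k ≠ c (v k)) →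
        (∀ k, u' k = v k ∨ u' k = x k) → ∃ r ∈ C1, ∀ k, r k = v k ∨ r k = x k := by
      intro x hx hxu
      have hxj : x j = q j := by
        rcases hxu j with h | h
        · rw [hu'j] at h; exact absurd h hqj
        · rw [hu'j] at h; exact h.symm
      have hxU : ∀ k, u k = v k ∨ u k = x k := by
        intro k
        by_contra hcon
        push Not at hcon
        have h1 := hCu p hp k hcon.1
        have h2 := hCu q hq k hcon.1
        by_cases hk : k = j
        · subst hk; exact hne (h1.trans h2.symm)
        · rcases hxu k with h | h
          · rw [hu'k k hk, h1] at h; exact hcon.1 h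
          · rw [hu'k k hk, h1] at h; exact hcon.2 h
      obtain ⟨r, hr, hrx⟩ := hcov x hx hxU
      refine ⟨r, Finset.mem_filter.2 ⟨hr, ?_⟩, hrx⟩
      rcases hrx j with h | h
      · -- then r meets p
        exfalso
        let y := Function.update x j (p j)
        have hyj : y j = p j := Function.update_self ..
        have hyk : ∀ k, k ≠ j → y k = x k := fun k hk => Function.update_of_ne hk ..
        have : r = p := by
          apply hcommon r hr p hp y
          · intro k
            by_cases hk : k = j
            · subst hk; rw [hyj]; exact ⟨hpj, hCv p hp k⟩
            · rw [hyk k hk]; exact hx k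
          · intro k
            by_cases hk : k = j
            · subst hk; exact Or.inl h
            · rw [hyk k hk]; exact hrx k
          · intro k
            by_cases hk : k = j
            · subst hk; exact Or.inr hyj.symm
            · rw [hyk k hk, ← hu'k k hk]; exact hxu k
        exact hpj (this ▸ h)
      · rw [h, hxj]
    -- each word of C1 lies in u'
    have hC1u : ∀ r ∈ C1, ∀ k, u' k ≠ v k → r k = u' k := by
      intro r hr k huk
      obtain ⟨hrC, hrj⟩ := Finset.mem_filter.1 hr
      by_cases hk : k = j
      · subst hk; rw [hu'j, hrj]
      rw [hu'k k hk] at huk ⊢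
      by_contra hrk
      -- choose a point of r with value `c (p k)` at k
      obtain ⟨x, hx, hxr⟩ := hpt r (hCv r hrC)
      let y := Function.update (Function.update x k (c (p k))) j (p j)
      have hyj : y j = p j := Function.update_self ..
      have hyk : y k = c (p k) := by
        simp only [y]; rw [Function.update_of_ne hk, Function.update_self]
      have hyl : ∀ l, l ≠ j → l ≠ k → y l = x l := fun l h1 h2 => by
        simp only [y]; rw [Function.update_of_ne h1, Function.update_of_ne h2]
      have hrk' : r k = v k ∨ r k = y k := by
        rw [hyk]
        by_cases h : r k = v k
        · exact Or.inl h
        · rcases h4 (v k) (r k) (p k) h (hCv r hrC k) huk (hCv p hp k) with h | h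
          · exact absurd h hrk
          · exact Or.inr h
      have hy : ∀ l, y l ≠ v l ∧ y l ≠ c (v l) := by
        intro l
        by_cases h1 : l = j
        · subst h1; rw [hyj]; exact ⟨hpj, hCv p hp l⟩
        by_cases h2 : l = k
        · subst h2; rw [hyk]
          exact ⟨fun h => hCv p hp l (by rw [← h, hc]), fun h => huk (hinj _ _ h)⟩
        · rw [hyl l h1 h2]; exact hx l
      have hyU : ∀ l, u l = v l ∨ u l = y l := by
        intro l
        by_contra hcon
        push Not at hcon
        have e1 := hCu p hp l hcon.1
        have e2 := hCu r hrC l hcon.1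
        by_cases h1 : l = j
        · subst h1; exact hcon.2 (by rw [hyj, e1])
        by_cases h2 : l = k
        · subst h2; exact hrk (e2.trans e1.symm)
        · rw [hyl l h1 h2] at hcon
          rcases hxr l with h | h
          · exact hcon.1 (by rw [← e2, h])
          · exact hcon.2 (by rw [← e2, h])
      obtain ⟨r', hr', hr'y⟩ := hcov y hy hyU
      rcases hr'y j with h | h
      · -- r' meets r
        let z := Function.update y j (q j)
        have hzj : z j = q j := Function.update_self ..
        have hzk : ∀ l, l ≠ j → z l = y l := fun l hl => Function.update_of_ne hl ..
        have : r' = r := by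
          apply hcommon r' hr' r hrC z
          · intro l
            by_cases hl : l = j
            · subst hl; rw [hzj]; exact ⟨hqj, hCv q hq l⟩
            · rw [hzk l hl]; exact hy l
          · intro l
            by_cases hl : l = j
            · subst hl; exact Or.inl h
            · rw [hzk l hl]; exact hr'y l
          · intro l
            by_cases hl : l = j
            · subst hl; rw [hzj]; exact Or.inr hrj
            · rw [hzk l hl]
              by_cases h2 : l = k
              · subst h2; exact hrk'
              · rw [hyl l hl h2]; exact hxr l
        rw [this, hrj] at h
        exact hqj h
      · have : r' = p := huniq r' hr' (h.trans hyj)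
        subst this
        rcases hr'y k with h' | h'
        · exact huk h'
        · rw [hyk] at h'; exact hc' _ h'.symm
    have hqC1 : q ∈ C1 := Finset.mem_filter.2 ⟨hq, rfl⟩
    have hC1lt : C1.card < n := by
      rw [← hCn]
      apply Finset.card_lt_card
      refine ⟨Finset.filter_subset _ _, fun h => ?_⟩
      exact hne (Finset.mem_filter.1 (h hp)).2
    have hC1pos : 0 < C1.card := Finset.card_pos.2 ⟨q, hqC1⟩
    have hu'v : ∀ k, u' k ≠ c (v k) := by
      intro k
      by_cases hk : k = j
      · subst hk; rw [hu'j]; exact hCv q hq k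
      · rw [hu'k k hk]; exact hCv p hp k
    by_cases h1 : C1.card = 1
    · -- twin pair p, q
      obtain ⟨r, hr⟩ := Finset.card_eq_one.1 h1
      have hqr : q = r := by simpa [hr] using hqC1
      subst hqr
      refine ⟨p, hp, q, hq, j, hpq, fun k hk => ?_⟩
      by_cases hpk : p k = v k
      · by_contra hqk
        rw [hpk] at hqk
        have hqv : q k ≠ v k := fun h => hqk h.symm
        obtain ⟨x, hx, hxu⟩ := hpt u' hu'v
        let y := Function.update x k (c (q k))
        have hyk : y k = c (q k) := Function.update_self ..
        have hyl : ∀ l, l ≠ k → y l = x l := fun l hl => Function.update_of_ne hl ..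
        obtain ⟨r, hr1, hry⟩ := hcov' y (by
          intro l
          by_cases hl : l = k
          · subst hl; rw [hyk]
            exact ⟨fun h => hCv q hq l (by rw [← h, hc]), fun h => hqv (hinj _ _ h)⟩
          · rw [hyl l hl]; exact hx l) (by
          intro l
          by_cases hl : l = k
          · subst hl; rw [hu'k l hk]; exact Or.inl hpk
          · rw [hyl l hl]; exact hxu l)
        rw [hr, Finset.mem_singleton] at hr1
        subst hr1
        rcases hry k with h | h
        · exact hqv h
        · rw [hyk] at h; exact hc' _ h.symm
      · have := hC1u q hqC1 k (by rw [hu'k k hk]; exact hpk)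
        rw [this, hu'k k hk]
    · obtain ⟨p', hp', q', hq', j', ht⟩ := ih C1.card hC1lt C1 u' rfl (by omega) (by omega)
        (fun r hr s hs => hC r (Finset.mem_filter.1 hr).1 s (Finset.mem_filter.1 hs).1)
        (fun r hr => hCv r (Finset.mem_filter.1 hr).1) hC1u hu'v hcov'
      exact ⟨p', (Finset.mem_filter.1 hp').1, q', (Finset.mem_filter.1 hq').1, j', ht⟩
  -- pick two words
  obtain ⟨p, hp, q, hq, hpq⟩ := Finset.one_lt_card.1 (show 1 < C.card by omega)
  obtain ⟨j, hj⟩ := hC p hp q hq hpq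
  have hpj : p j ≠ v j := fun h => hCv q hq j (by rw [← h, hj, hc])
  have hqj : q j ≠ v j := fun h => hCv p hp j (by rw [hj, h])
  have hne : p j ≠ q j := by rw [hj]; exact hc' _
  by_cases hu1 : ∀ r ∈ C, r j = p j → r = p
  · exact key p hp q hq j hj hpj hqj hu1
  by_cases hu2 : ∀ r ∈ C, r j = q j → r = q
  · exact key q hq p hp j (by rw [hj, hc]) hqj hpj hu2
  push Not at hu1 hu2
  obtain ⟨p2, hp2, hp2j, hp2n⟩ := hu1
  obtain ⟨q2, hq2, hq2j, hq2n⟩ := hu2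
  -- now C = {p, p2, q, q2}
  have hsub : ({p, p2, q, q2} : Finset (Fin d → S)) ⊆ C := by
    intro r hr
    simp only [Finset.mem_insert, Finset.mem_singleton] at hr
    rcases hr with rfl | rfl | rfl | rfl <;> assumption
  have hc4 : ({p, p2, q, q2} : Finset (Fin d → S)).card = 4 := by
    have e1 : p ≠ q2 := fun h => hne (by rw [h, hq2j])
    have e2 : p2 ≠ q := fun h => hne (by rw [← hp2j, h])
    have e3 : p2 ≠ q2 := fun h => hne (by rw [← hp2j, h, hq2j])
    rw [Finset.card_insert_of_notMem, Finset.card_insert_of_notMem, Finset.card_insert_of_notMem,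
      Finset.card_singleton]
    · simpa using hq2n.symm
    · simpa using ⟨e2, e3⟩
    · simpa using ⟨hp2n.symm, hpq, e1⟩
  have hCeq := Finset.eq_of_subset_of_card_le hsub (by omega)
  have huj : u j = v j := by
    by_contra h
    exact hne ((hCu p hp j h).trans (hCu q hq j h).symm)
  obtain ⟨p', hp', q', hq', j', ht⟩ := ih 2 (by
      rw [← hCeq, hc4] at hCn; omega) {p, p2} (Function.update u j (p j))
    (Finset.card_pair hp2n.symm) le_rfl (by norm_num)
    (fun r hr s hs => hC r (hsub (by
        simp only [Finset.mem_insert, Finset.mem_singleton] at hr ⊢; tauto)) s (hsub (by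
        simp only [Finset.mem_insert, Finset.mem_singleton] at hs ⊢; tauto)))
    (fun r hr => hCv r (hsub (by
        simp only [Finset.mem_insert, Finset.mem_singleton] at hr ⊢; tauto)))
    (by
      intro r hr k hk
      have hrC : r ∈ C := hsub (by
        simp only [Finset.mem_insert, Finset.mem_singleton] at hr ⊢; tauto)
      by_cases hkj : k = j
      · subst hkj
        rw [Function.update_self]
        simp only [Finset.mem_insert, Finset.mem_singleton] at hr
        rcases hr with rfl | rfl
        · rfl
        · exact hp2j
      · rw [Function.update_of_ne hkj] at hk ⊢
        exact hCu r hrC k hk)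
    (by
      intro k
      by_cases hkj : k = j
      · subst hkj; rw [Function.update_self]; exact hCv p hp k
      · rw [Function.update_of_ne hkj]; exact huv k)
    (by
      intro x hx hxu
      have hxj : x j = p j := by
        have := hxu j
        rw [Function.update_self] at this
        rcases this with h | h
        · exact absurd h hpj
        · exact h.symm
      obtain ⟨r, hr, hrx⟩ := hcov x hx (by
        intro k
        by_cases hkj : k = j
        · subst hkj; exact Or.inl huj
        · have := hxu k
          rwa [Function.update_of_ne hkj] at this)
      refine ⟨r, ?_, hrx⟩
      rw [← hCeq] at hr
      simp only [Finset.mem_insert, Finset.mem_singleton] at hr ⊢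
      have hrj := hrx j
      rw [hxj] at hrj
      rcases hr with rfl | rfl | rfl | rfl
      · exact Or.inl rfl
      · exact Or.inr rfl
      · rcases hrj with h | h
        · exact absurd h hqj
        · exact absurd h.symm hne
      · rw [hq2j] at hrj
        rcases hrj with h | h
        · exact absurd h hqj
        · exact absurd h.symm hne)
  exact ⟨p', hsub (by simp only [Finset.mem_insert, Finset.mem_singleton] at hp' ⊢; tauto),
    q', hsub (by simp only [Finset.mem_insert, Finset.mem_singleton] at hq' ⊢; tauto), j', ht⟩

/-- Glue-and-cut steps preserve polybox codes. -/
theorem isCode_step {c : S → S} (hc : ∀ s, c (c s) = s) (hc' : ∀ s, c s ≠ s)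
    {V W : Finset (Fin d → S)} (hV : IsCode c V) (h : GCStep c V W) : IsCode c W := by
  obtain ⟨v, w, q, t, i, hv, hw, hvw, hqt, hqv, rfl⟩ := h
  have hsymm : ∀ x y : Fin d → S, Dich c x y → Dich c y x := by
    rintro x y ⟨k, hk⟩
    exact ⟨k, by rw [hk, hc]⟩
  have hnew : ∀ r ∈ V \ {v, w}, ∀ z : Fin d → S, (∀ k, k ≠ i → z k = v k) → Dich c r z := by
    intro r hr z hz
    simp only [Finset.mem_sdiff, Finset.mem_insert, Finset.mem_singleton, not_or] at hr
    obtain ⟨hrV, hrv, hrw⟩ := hr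
    obtain ⟨k, hk⟩ := hV r hrV v hv hrv
    obtain ⟨l, hl⟩ := hV r hrV w hw hrw
    by_cases hki : k = i
    · by_cases hli : l = i
      · subst hki
        subst hli
        have h1 := hvw.1
        have h2 : c (v l) = c (w l) := hk.symm.trans hl
        rw [h1, hc] at h2
        exact absurd h2.symm (hc' _)
      · exact ⟨l, by rw [hl, hz l hli, hvw.2 l hli]⟩
    · exact ⟨k, by rw [hk, hz k hki]⟩
  have hq : ∀ z, z = q ∨ z = t → ∀ k, k ≠ i → z k = v k := by
    rintro z (rfl | rfl) k hk
    · exact hqv k hk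
    · rw [← hqt.2 k hk]; exact hqv k hk
  intro x hx y hy hxy
  rw [Finset.mem_union] at hx hy
  rcases hx with hx | hx <;> rcases hy with hy | hy
  · exact hV x (Finset.mem_sdiff.1 hx).1 y (Finset.mem_sdiff.1 hy).1 hxy
  · exact hnew x hx y (hq y (by simpa using hy))
  · exact hsymm _ _ (hnew y hy x (hq x (by simpa using hx)))
  · have e : Dich c q t := ⟨i, hqt.1⟩
    simp only [Finset.mem_insert, Finset.mem_singleton] at hx hy
    rcases hx with rfl | rfl <;> rcases hy with rfl | rfl
    · exact absurd rfl hxy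
    · exact e
    · exact hsymm _ _ e
    · exact absurd rfl hxy

theorem isCode_gc {c : S → S} (hc : ∀ s, c (c s) = s) (hc' : ∀ s, c s ≠ s)
    {V W : Finset (Fin d → S)} (hV : IsCode c V) (h : GC c V W) : IsCode c W := by
  induction h with
  | refl => exact hV
  | tail _ hst ih => exact isCode_step hc hc' ih hst

/-- A word covered by at most four words of a code can be produced by gluing and cutting
these words. -/
theorem glue_word {c : S → S} (hc : ∀ s, c (c s) = s) (hc' : ∀ s, c s ≠ s)
    (h4 : ∀ r s t : S, s ≠ r → s ≠ c r → t ≠ r → t ≠ c r → s = t ∨ s = c t)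
    (hex : ∀ r : S, ∃ s, s ≠ r ∧ s ≠ c r)
    {sat : Bool × Bool → S → Bool} (hs : IsSat c sat) (v : Fin d → S) (n : ℕ) :
    ∀ (P C : Finset (Fin d → S)), C.card = n → n ≤ 4 → IsCode c P → C ⊆ P →
      (∀ p ∈ C, ¬ Dich c p v) →
      (∀ x, Bx sat x v → ∃ p ∈ C, Bx sat x p) →
      ∃ P', GC c P P' ∧ v ∈ P' ∧ P \ C ⊆ P' := by
  classical
  induction n with
  | zero =>
    intro P C hC0 _ _ _ _ hcov
    obtain ⟨x, hx, _⟩ := exists_common hs (v := v) (w := v)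
      (by rintro ⟨k, hk⟩; exact hc' _ hk.symm)
    obtain ⟨p, hp, _⟩ := hcov x hx
    rw [Finset.card_eq_zero.1 hC0] at hp
    simp at hp
  | succ n ih =>
  intro P C hCn hn hP hCP hnd hcov
  have hCv : ∀ p ∈ C, ∀ k, p k ≠ c (v k) := fun p hp k hk => hnd p hp ⟨k, hk⟩
  -- syntactic form of the covering
  have hcov2 : ∀ x : Fin d → S, (∀ k, x k ≠ v k ∧ x k ≠ c (v k)) →
      ∃ p ∈ C, ∀ k, p k = v k ∨ p k = x k := by
    intro x hx
    obtain ⟨X, hXx, hXv⟩ := exists_common hs (v := x) (w := v)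
      (by rintro ⟨k, hk⟩; exact (hx k).2 hk)
    obtain ⟨p, hp, hXp⟩ := hcov X hXv
    refine ⟨p, hp, fun k => ?_⟩
    by_cases hpk : p k = v k
    · exact Or.inl hpk
    · rcases h4 (v k) (p k) (x k) hpk (hCv p hp k) (hx k).1 (hx k).2 with h | h
      · exact Or.inr h
      · have h1 := hXp k
        rw [h, hs.compl, hXx k] at h1
        simp at h1
  rcases Nat.eq_zero_or_pos n with rfl | hn0
  · -- a single word: it equals v
    obtain ⟨p, rfl⟩ := Finset.card_eq_one.1 hCn
    have hpv : p = v := by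
      funext k
      by_contra hk
      choose t ht using hex
      obtain ⟨q, hq, hqx⟩ := hcov2 (Function.update (fun k => t (v k)) k (c (p k))) (by
        intro l
        by_cases hl : l = k
        · subst hl
          rw [Function.update_self]
          have := hCv p (Finset.mem_singleton_self p) l
          exact ⟨fun h => this (by rw [← h, hc]), fun h => hk (by rw [← hc (p l), h, hc])⟩
        · rw [Function.update_of_ne hl]; exact ht (v l))
      rw [Finset.mem_singleton] at hq
      subst hq
      rcases hqx k with h | h
      · exact hk h
      · rw [Function.update_self] at h; exact hc' _ h.symm
    exact ⟨P, Relation.ReflTransGen.refl, hpv ▸ hCP (Finset.mem_singleton_self p),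
      Finset.sdiff_subset⟩
  · obtain ⟨p, hp, q, hq, j, ht⟩ := exists_twin_s8 c hc v h4 hex hc' (n + 1) C v hCn (by omega) hn
      (fun x hx y hy => hP x (hCP hx) y (hCP hy)) hCv (fun _ _ k hk => absurd rfl hk)
      (fun k hk => hc' _ hk.symm) (fun x hx _ => hcov2 x hx)
    have hpj : p j ≠ v j := fun h => hCv q hq j (by rw [← h, ht.1, hc])
    have hqj : q j ≠ v j := fun h => hCv p hp j (by rw [ht.1, h])
    have hpq : p ≠ q := fun h => hc' (q j) (by rw [← ht.1, h])
    let g : Fin d → S := Function.update p j (v j)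
    let g' : Fin d → S := Function.update p j (c (v j))
    have hgj : g j = v j := Function.update_self ..
    have hgk : ∀ k, k ≠ j → g k = p k := fun k hk => Function.update_of_ne hk ..
    have hg'j : g' j = c (v j) := Function.update_self ..
    have hg'k : ∀ k, k ≠ j → g' k = p k := fun k hk => Function.update_of_ne hk ..
    have hgp : ¬ Dich c g p := by
      rintro ⟨k, hk⟩
      by_cases h : k = j
      · subst h
        rw [hgj] at hk
        exact hCv p hp k (by rw [hk, hc])
      · rw [hgk k h] at hk; exact hc' _ hk.symm
    have hgP : g ∉ P := by
      intro hgP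
      exact hgp (hP g hgP p (hCP hp) (fun h => hpj (by rw [← h, hgj])))
    have hstep : GCStep c P ((P \ {p, q}) ∪ {g, g'}) :=
      ⟨p, q, g, g', j, hCP hp, hCP hq, ht, ⟨by rw [hgj, hg'j, hc],
        fun k hk => by rw [hgk k hk, hg'k k hk]⟩, hgk, rfl⟩
    have hcard : (insert g (C \ {p, q})).card = n := by
      rw [Finset.card_insert_of_notMem (fun h => hgP (hCP (Finset.mem_sdiff.1 h).1)),
        Finset.card_sdiff_of_subset (by
          intro r hr
          simp only [Finset.mem_insert, Finset.mem_singleton] at hr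
          rcases hr with rfl | rfl <;> assumption), Finset.card_pair hpq]
      omega
    obtain ⟨P', hP', hvP', hsub⟩ := ih ((P \ {p, q}) ∪ {g, g'}) (insert g (C \ {p, q})) hcard
      (by omega) (isCode_step hc hc' hP hstep)
      (by
        intro r hr
        simp only [Finset.mem_insert, Finset.mem_sdiff, Finset.mem_union,
          Finset.mem_singleton] at hr ⊢
        rcases hr with h | h
        · exact Or.inr (Or.inl h)
        · exact Or.inl ⟨hCP h.1, h.2⟩)
      (by
        intro r hr
        rw [Finset.mem_insert] at hr
        rcases hr with rfl | h
        · rintro ⟨k, hk⟩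
          by_cases h : k = j
          · subst h
            rw [hgj] at hk; exact hc' _ hk.symm
          · rw [hgk k h] at hk; exact hCv p hp k hk
        · exact hnd r (Finset.mem_sdiff.1 h).1)
      (by
        intro x hx
        obtain ⟨r, hr, hxr⟩ := hcov x hx
        by_cases hrpq : r = p ∨ r = q
        · refine ⟨g, Finset.mem_insert_self _ _, fun k => ?_⟩
          by_cases h : k = j
          · subst h; rw [hgj]; exact hx k
          · rw [hgk k h]
            rcases hrpq with rfl | rfl
            · exact hxr k
            · rw [ht.2 k h]; exact hxr k
        · refine ⟨r, Finset.mem_insert_of_mem (Finset.mem_sdiff.2 ⟨hr, by simpa using hrpq⟩), hxr⟩)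
    refine ⟨P', Relation.ReflTransGen.head hstep hP', hvP', fun r hr => hsub ?_⟩
    obtain ⟨hrP, hrC⟩ := Finset.mem_sdiff.1 hr
    have h1 : r ≠ p := fun h => hrC (h ▸ hp)
    have h2 : r ≠ q := fun h => hrC (h ▸ hq)
    have h3 : r ≠ g := fun h => hgP (h ▸ hrP)
    simp only [Finset.mem_insert, Finset.mem_sdiff, Finset.mem_union, Finset.mem_singleton]
    tauto

theorem delta_le {c : S → S} {V W : Finset (Fin d → S)} {w : Fin d → S} (hw : w ∈ W)
    {U : Finset (Fin d → S)} (hU : U.card ≤ 4) (h : ∀ v ∈ V, ¬ Dich c v w → v ∈ U) :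
    delta c V W ≤ 4 := by
  unfold delta
  refine (Finset.inf_le hw).trans ?_
  have h1 : (V.filter fun v => ¬ Dich c v w).card ≤ 4 := by
    refine (Finset.card_le_card ?_).trans hU
    intro v hv
    exact h v (Finset.mem_filter.1 hv).1 (Finset.mem_filter.1 hv).2
  exact_mod_cast h1

/-- The number of words of `W` with letter `b` is controlled by `V`. -/
theorem card_letter_le {c : S → S} (hc : ∀ s, c (c s) = s) (hc' : ∀ s, c s ≠ s)
    {a b : S} (hS : ∀ s : S, s = a ∨ s = c a ∨ s = b ∨ s = c b)
    (hba : b ≠ a) {sat : Bool × Bool → S → Bool} (hs : IsSat c sat)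
    {V W : Finset (Fin d → S)} (hW : IsCode c W) (i : Fin d) (heq : Covered c W V) :
    (W.filter fun w => w i = b).card ≤
      (V.filter fun v => v i = c a).card + (V.filter fun v => v i = b).card := by
  classical
  obtain ⟨σ, hσa, hσb⟩ := hs.common (c a) b (fun h => hba (by rw [← hc b, ← h, hc]))
  refine (card_le_of_slice hs (A := (V.filter fun v => v i = c a) ∪ (V.filter fun v => v i = b))
    ?_ i σ ?_ ?_).trans (Finset.card_union_le _ _)
  · intro p hp q hq
    exact hW p (Finset.mem_filter.1 hp).1 q (Finset.mem_filter.1 hq).1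
  · intro p hp
    rw [(Finset.mem_filter.1 hp).2]; exact hσb
  · rintro x hxi ⟨p, hp, hxp⟩
    obtain ⟨v, hv, hxv⟩ := cov_of_coveredWord c hc' hs (heq p (Finset.mem_filter.1 hp).1) x hxp
    refine ⟨v, ?_, hxv⟩
    have h1 := hxv i
    rw [hxi] at h1
    simp only [Finset.mem_union, Finset.mem_filter]
    rcases hS (v i) with h | h | h | h
    · rw [h] at h1
      rw [hs.compl, h1] at hσa
      simp at hσa
    · exact Or.inl ⟨hv, h⟩
    · exact Or.inr ⟨hv, h⟩
    · rw [h, hs.compl, hσb] at h1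
      simp at h1

/-- The case where `W` has no letter `c a` and `V` has a word with letter `b`. -/
theorem case_b {c : S → S} (hc : ∀ s, c (c s) = s) (hc' : ∀ s, c s ≠ s)
    {a b : S} (hS : ∀ s : S, s = a ∨ s = c a ∨ s = b ∨ s = c b)
    (hba : b ≠ a) (hba' : b ≠ c a) {sat : Bool × Bool → S → Bool} (hs : IsSat c sat)
    {V W : Finset (Fin d → S)} (hV : IsCode c V) (hW : IsCode c W) (i : Fin d)
    (heq : Equivalent c V W)
    (hle : (V.filter fun v => v i = c a).card + (V.filter fun v => v i = b).card ≤ 4)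
    (hWa : ∀ w ∈ W, w i ≠ c a) {v : Fin d → S} (hv : v ∈ V) (hvb : v i = b) :
    delta c W V ≤ 4 := by
  refine delta_le hv ((card_letter_le hc hc' hS hba hs hW i heq.2).trans hle) ?_
  intro w hw hwv
  rw [Finset.mem_filter]
  refine ⟨hw, ?_⟩
  rcases hS (w i) with h | h | h | h
  · exfalso
    obtain ⟨x, hxw, hxv⟩ := exists_common hs hwv
    obtain ⟨ψ, hψa, hψb⟩ := hs.common a (c b) (by rw [hc]; exact hba.symm)
    have hx' : Bx sat (Function.update x i ψ) w :=
      bx_update.2 ⟨fun k _ => hxw k, by rw [h]; exact hψa⟩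
    obtain ⟨v2, hv2, hxv2⟩ := cov_of_coveredWord c hc' hs (heq.2 w hw) _ hx'
    obtain ⟨hoff, hv2i⟩ := bx_update.1 hxv2
    rcases hS (v2 i) with e | e | e | e
    · have : v = v2 := by
        apply eq_of_common hs hV hv hv2 hxv
        intro k
        by_cases hk : k = i
        · subst hk
          rw [e, ← h]; exact hxw k
        · exact hoff k hk
      rw [← this, hvb] at e
      exact hba e
    · rw [e, hs.compl, hψa] at hv2i
      simp at hv2i
    · rw [e] at hv2i
      rw [hs.compl, hv2i] at hψb
      simp at hψb
    · obtain ⟨ψ2, h2a, h2b⟩ := hs.common (c a) (c b) (by rw [hc]; exact hba'.symm)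
      have hx2 : Bx sat (Function.update x i ψ2) v2 :=
        bx_update.2 ⟨hoff, by rw [e]; exact h2b⟩
      obtain ⟨w2, hw2, hxw2⟩ := cov_of_coveredWord c hc' hs (heq.1 v2 hv2) _ hx2
      obtain ⟨hoff2, hw2i⟩ := bx_update.1 hxw2
      rcases hS (w2 i) with f | f | f | f
      · rw [f] at hw2i
        rw [hs.compl, hw2i] at h2a
        simp at h2a
      · exact hWa w2 hw2 f
      · rw [f] at hw2i
        rw [hs.compl, hw2i] at h2b
        simp at h2b
      · have : w = w2 := eq_of_common hs hW hw hw2 hx'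
          (bx_update.2 ⟨hoff2, by rw [f]; exact hψb⟩)
        rw [← this, h] at f
        exact hba' (by rw [f, hc])
  · exact absurd h (hWa w hw)
  · exact h
  · exact absurd ⟨i, by rw [h, hvb]⟩ hwv

/-- Covering of `v` with letter `b` at `i` by the words of `W` with letter `b`. -/
theorem cov_letter {c : S → S} (hc : ∀ s, c (c s) = s) (hc' : ∀ s, c s ≠ s)
    {a b : S} (hS : ∀ s : S, s = a ∨ s = c a ∨ s = b ∨ s = c b)
    (hba : b ≠ a) {sat : Bool × Bool → S → Bool} (hs : IsSat c sat)
    {V W : Finset (Fin d → S)} (i : Fin d) (heq : Covered c V W)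
    (hWa : ∀ w ∈ W, w i ≠ c a) {v : Fin d → S} (hv : v ∈ V) (hva : v i = c a)
    (x : Fin d → Bool × Bool) (hx : Bx sat x (Function.update v i b)) :
    ∃ p ∈ W.filter (fun w => w i = b), Bx sat x p := by
  obtain ⟨σ, hσa, hσb⟩ := hs.common (c a) b (fun h => hba (by rw [← hc b, ← h, hc]))
  have hxi : sat (x i) b = true := by simpa using hx i
  have h1 : Bx sat (Function.update x i σ) v :=
    bx_update.2 ⟨fun k hk => by simpa [hk] using hx k, by rw [hva]; exact hσa⟩
  obtain ⟨w, hw, hxw⟩ := cov_of_coveredWord c hc' hs (heq v hv) _ h1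
  obtain ⟨hoff, hwi⟩ := bx_update.1 hxw
  have hwb : w i = b := by
    rcases hS (w i) with f | f | f | f
    · rw [f] at hwi
      rw [hs.compl, hwi] at hσa
      simp at hσa
    · exact absurd f (hWa w hw)
    · exact f
    · rw [f, hs.compl, hσb] at hwi
      simp at hwi
  refine ⟨w, Finset.mem_filter.2 ⟨hw, hwb⟩, fun k => ?_⟩
  by_cases hk : k = i
  · subst hk; rw [hwb]; exact hxi
  · exact hoff k hk

/-- Glue a word out of a small covering subfamily (restricting to words meeting it). -/
theorem glue_word' {c : S → S} (hc : ∀ s, c (c s) = s) (hc' : ∀ s, c s ≠ s)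
    (h4 : ∀ r s t : S, s ≠ r → s ≠ c r → t ≠ r → t ≠ c r → s = t ∨ s = c t)
    (hex : ∀ r : S, ∃ s, s ≠ r ∧ s ≠ c r)
    {sat : Bool × Bool → S → Bool} (hs : IsSat c sat) (v : Fin d → S)
    {P C : Finset (Fin d → S)} (hC4 : C.card ≤ 4) (hP : IsCode c P) (hCP : C ⊆ P)
    (hcov : ∀ x, Bx sat x v → ∃ p ∈ C, Bx sat x p) :
    ∃ P', GC c P P' ∧ v ∈ P' ∧ P \ C ⊆ P' := by
  classical
  obtain ⟨P', h1, h2, h3⟩ := glue_word hc hc' h4 hex hs v _ P (C.filter fun p => ¬ Dich c p v) rfl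
    ((Finset.card_filter_le _ _).trans hC4) hP ((Finset.filter_subset _ _).trans hCP)
    (fun p hp => (Finset.mem_filter.1 hp).2)
    (fun x hx => by
      obtain ⟨p, hp, hxp⟩ := hcov x hx
      exact ⟨p, Finset.mem_filter.2 ⟨hp, not_dich_of_common hs hxp hx⟩, hxp⟩)
  exact ⟨P', h1, h2, fun r hr => h3 (Finset.mem_sdiff.2 ⟨(Finset.mem_sdiff.1 hr).1,
    fun h => (Finset.mem_sdiff.1 hr).2 (Finset.mem_filter.1 h).1⟩)⟩

/-- Lemma "fla" of the paper. -/
theorem flat_like_code_low_common_density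
    {S : Type} [Fintype S] [DecidableEq S] (c : S → S)
    (hc : ∀ s, c (c s) = s) (hc' : ∀ s, c s ≠ s)
    (a b : S) (hS : ∀ s : S, s = a ∨ s = c a ∨ s = b ∨ s = c b)
    (hba : b ≠ a) (hba' : b ≠ c a) {d : ℕ}
    (V W : Finset (Fin d → S)) (hV : IsCode c V) (hW : IsCode c W) (i : Fin d)
    (hne : ((V.filter fun v => v i = c a) ∪ (V.filter fun v => v i = b) ∪
      (V.filter fun v => v i = c b)).Nonempty)
    (hle : (V.filter fun v => v i = c a).card + (V.filter fun v => v i = b).card +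
      (V.filter fun v => v i = c b).card ≤ 4)
    (hWne : W.Nonempty) (heq : Equivalent c V W) :
    ∃ W' : Finset (Fin d → S), GC c W W' ∧
      min (delta c V W') (delta c W' V) ≤ 4 := by
  classical
  obtain ⟨sat, hs⟩ := exists_sat c hc hc' a b hS hba hba'
  have hb1 : c b ≠ a := fun h => hba' (by rw [← h, hc])
  have hb2 : c b ≠ c a := fun h => hba (by rw [← hc b, h, hc])
  have ha := hc' a
  have hb := hc' b
  have hS' : ∀ s : S, s = a ∨ s = c a ∨ s = c b ∨ s = c (c b) := by
    intro s
    rw [hc]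
    rcases hS s with h | h | h | h <;> simp [h]
  have h4 : ∀ r s t : S, s ≠ r → s ≠ c r → t ≠ r → t ≠ c r → s = t ∨ s = c t := by
    intro r s t h1 h2 h3 h5
    rcases hS r with rfl | rfl | rfl | rfl <;> rcases hS s with rfl | rfl | rfl | rfl <;>
      rcases hS t with rfl | rfl | rfl | rfl <;> simp_all
  have hex : ∀ r : S, ∃ s, s ≠ r ∧ s ≠ c r := by
    intro r
    rcases hS r with rfl | rfl | rfl | rfl
    · exact ⟨b, hba, hba'⟩
    · exact ⟨b, hba', by rw [hc]; exact hba⟩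
    · exact ⟨a, hba.symm, hb1.symm⟩
    · exact ⟨a, hb1.symm, by rw [hc]; exact hba.symm⟩
  -- a word with letter `c a` suffices
  have hfin : ∀ W' : Finset (Fin d → S), ∀ w ∈ W', w i = c a → delta c V W' ≤ 4 := by
    intro W' w hw hwi
    refine delta_le hw (U := (V.filter fun v => v i = c a) ∪ (V.filter fun v => v i = b) ∪
      (V.filter fun v => v i = c b)) ?_ ?_
    · refine (Finset.card_union_le _ _).trans ?_
      have := Finset.card_union_le (V.filter fun v => v i = c a) (V.filter fun v => v i = b)
      omega
    · intro v hv hvw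
      have : v i ≠ a := fun h => hvw ⟨i, by rw [h, hwi, hc]⟩
      simp only [Finset.mem_union, Finset.mem_filter]
      rcases hS (v i) with h | h | h | h
      · exact absurd h this
      · exact Or.inl (Or.inl ⟨hv, h⟩)
      · exact Or.inl (Or.inr ⟨hv, h⟩)
      · exact Or.inr ⟨hv, h⟩
  by_cases hWa : ∃ w ∈ W, w i = c a
  · obtain ⟨w, hw, hwi⟩ := hWa
    exact ⟨W, Relation.ReflTransGen.refl, (min_le_left _ _).trans (hfin W w hw hwi)⟩
  push Not at hWa
  by_cases hVb : ∃ v ∈ V, v i = b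
  · obtain ⟨v, hv, hvi⟩ := hVb
    exact ⟨W, Relation.ReflTransGen.refl, (min_le_right _ _).trans
      (case_b hc hc' hS hba hba' hs hV hW i heq (by omega) hWa hv hvi)⟩
  by_cases hVb' : ∃ v ∈ V, v i = c b
  · obtain ⟨v, hv, hvi⟩ := hVb'
    exact ⟨W, Relation.ReflTransGen.refl, (min_le_right _ _).trans
      (case_b hc hc' hS' hb1 hb2 hs hV hW i heq (by omega) hWa hv hvi)⟩
  push Not at hVb hVb'
  obtain ⟨v, hv⟩ := hne
  simp only [Finset.mem_union, Finset.mem_filter] at hv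
  obtain ⟨hvV, hvi⟩ : v ∈ V ∧ v i = c a := by
    rcases hv with (h | h) | h
    · exact h
    · exact absurd h.2 (hVb v h.1)
    · exact absurd h.2 (hVb' v h.1)
  have hcb := card_letter_le hc hc' hS hba hs hW i heq.2
  have hcb' := card_letter_le hc hc' hS' hb1 hs hW i heq.2
  obtain ⟨P1, hP1, hu1, hsub1⟩ := glue_word' hc hc' h4 hex hs (Function.update v i b)
    (P := W) (C := W.filter fun w => w i = b) (by omega) hW (Finset.filter_subset _ _)
    (cov_letter hc hc' hS hba hs i heq.1 hWa hvV hvi)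
  have hsubW : (W.filter fun w => w i = c b) ⊆ P1 := by
    intro w hw
    obtain ⟨hwW, hwi⟩ := Finset.mem_filter.1 hw
    refine hsub1 (Finset.mem_sdiff.2 ⟨hwW, fun h => ?_⟩)
    exact hb (hwi.symm.trans (Finset.mem_filter.1 h).2)
  obtain ⟨P2, hP2, hu2, hsub2⟩ := glue_word' hc hc' h4 hex hs (Function.update v i (c b))
    (P := P1) (C := W.filter fun w => w i = c b) (by omega) (isCode_gc hc hc' hW hP1) hsubW
    (cov_letter hc hc' hS' hb1 hs i heq.1 hWa hvV hvi)
  have hu1' : Function.update v i b ∈ P2 := by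
    refine hsub2 (Finset.mem_sdiff.2 ⟨hu1, fun h => ?_⟩)
    have := (Finset.mem_filter.1 h).2
    rw [Function.update_self] at this
    exact hb this.symm
  have hoff : ∀ (s t : S) (j : Fin d), j ≠ i →
      Function.update v i s j = Function.update v i t j := fun s t j hj => by
    rw [Function.update_of_ne hj, Function.update_of_ne hj]
  refine ⟨(P2 \ {Function.update v i b, Function.update v i (c b)}) ∪
    {Function.update v i a, Function.update v i (c a)}, ?_, ?_⟩
  · refine Relation.ReflTransGen.tail (hP1.trans hP2) ⟨Function.update v i b,
      Function.update v i (c b), Function.update v i a, Function.update v i (c a), i, hu1', hu2,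
      ⟨?_, hoff _ _⟩, ⟨?_, hoff _ _⟩, hoff _ _, rfl⟩
    · rw [Function.update_self, Function.update_self, hc]
    · rw [Function.update_self, Function.update_self, hc]
  · refine (min_le_left _ _).trans (hfin _ (Function.update v i (c a)) (by simp) ?_)
    rw [Function.update_self]

end PolyboxPaper
end

section
/- Let V, W ⊆ S^d be equivalent polybox codes with |V| = |W| = n, and suppose that every two equivalent polybox codes in S^d with n−1 words are strongly equivalent. If there exist w ∈ W and a code V̄ obtained from V by gluing and cutting with w ∈ V̄, then V and W are strongly equivalent. -/
/- Common framework: polybox codes over a finite alphabet `S` with a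
complementation `c : S → S` (an involution without fixed points). -/

namespace PolyboxPaper

variable {S : Type} [Fintype S] [DecidableEq S] {d : ℕ}

section Helpers

variable {c : S → S}

theorem Dich.symm_of (hc : ∀ s, c (c s) = s) {v w : Fin d → S} (h : Dich c v w) :
    Dich c w v := by
  obtain ⟨i, hi⟩ := h
  exact ⟨i, by rw [hi, hc]⟩

theorem Dich.irrefl (hc' : ∀ s, c s ≠ s) {v : Fin d → S} : ¬ Dich c v v := by
  rintro ⟨i, hi⟩
  exact hc' _ hi.symm

/-- A word dichotomous to both words of a twin pair is dichotomous to any word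
agreeing with them off the direction of the pair. -/
theorem dich_of_twin (hc : ∀ s, c (c s) = s) (hc' : ∀ s, c s ≠ s)
    {x v u q : Fin d → S} {i : Fin d} (hvu : TwinPair c v u i)
    (hq : ∀ j, j ≠ i → q j = v j) (hxv : Dich c x v) (hxu : Dich c x u) :
    Dich c x q := by
  obtain ⟨j, hj⟩ := hxv
  obtain ⟨k, hk⟩ := hxu
  by_cases hji : j = i
  · by_cases hki : k = i
    · subst hji
      subst hki
      exfalso
      have h1 : c (v k) = c (u k) := by rw [← hj, ← hk]
      rw [hvu.1, hc] at h1
      exact hc' _ h1.symm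
    · exact ⟨k, by rw [hk, hq k hki, hvu.2 k hki]⟩
  · exact ⟨j, by rw [hj, hq j hji]⟩

theorem box_sub_twin {X : Fin d → Type} {f : ∀ i, S → Set (X i)}
    (hf : IsRealization c X f)
    {v u q : Fin d → S} {i : Fin d} (hvu : TwinPair c v u i)
    (hq : ∀ j, j ≠ i → q j = v j) {x : ∀ i, X i} (hx : x ∈ box f q) :
    x ∈ box f v ∨ x ∈ box f u := by
  by_cases h : x i ∈ f i (u i)
  · right
    intro j
    by_cases hj : j = i
    · subst hj; exact h
    · rw [← hvu.2 j hj, ← hq j hj]; exact hx j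
  · left
    intro j
    by_cases hj : j = i
    · subst hj; rw [hvu.1, (hf j (u j)).2.2]; exact h
    · rw [← hq j hj]; exact hx j

theorem box_disjoint {X : Fin d → Type} {f : ∀ i, S → Set (X i)}
    (hf : IsRealization c X f) {v w : Fin d → S} (h : Dich c v w) {x : ∀ i, X i}
    (hv : x ∈ box f v) (hw : x ∈ box f w) : False := by
  obtain ⟨i, hi⟩ := h
  have h1 := hv i
  rw [hi, (hf i (w i)).2.2] at h1
  exact h1 (hw i)

theorem Covered.trans {A B C : Finset (Fin d → S)} (h1 : Covered c A B)
    (h2 : Covered c B C) : Covered c A C := by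
  intro v hv X f hf x hx
  have := h1 v hv X f hf hx
  simp only [Set.mem_iUnion] at this
  obtain ⟨b, hb, hxb⟩ := this
  exact h2 b hb X f hf hxb

theorem TwinPair.symm_of (hc : ∀ s, c (c s) = s) {v w : Fin d → S} {i : Fin d}
    (h : TwinPair c v w i) : TwinPair c w v i :=
  ⟨by rw [h.1, hc], fun j hj => (h.2 j hj).symm⟩

theorem GCStep.dich (hc : ∀ s, c (c s) = s) (hc' : ∀ s, c s ≠ s)
    {A B : Finset (Fin d → S)} (h : GCStep c A B) {x : Fin d → S}
    (hx : ∀ a ∈ A, Dich c x a) : ∀ b ∈ B, Dich c x b := by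
  obtain ⟨v, u, q, t, i, hv, hu, hvu, hqt, hq, rfl⟩ := h
  intro b hb
  simp only [Finset.mem_union, Finset.mem_sdiff, Finset.mem_insert,
    Finset.mem_singleton] at hb
  rcases hb with hb | rfl | rfl
  · exact hx b hb.1
  · exact dich_of_twin hc hc' hvu hq (hx v hv) (hx u hu)
  · exact dich_of_twin hc hc' hvu (fun j hj => by rw [← hqt.2 j hj, hq j hj])
      (hx v hv) (hx u hu)

theorem GCStep.covered {A B : Finset (Fin d → S)} (h : GCStep c A B) :
    Covered c A B ∧ Covered c B A := by
  obtain ⟨v, u, q, t, i, hv, hu, hvu, hqt, hq, rfl⟩ := h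
  have key : ∀ a ∈ A, a = v ∨ a = u ∨ a ∈ A \ {v, u} := by
    intro a ha
    simp only [Finset.mem_sdiff, Finset.mem_insert, Finset.mem_singleton]
    tauto
  constructor
  · intro a ha X f hf x hx
    simp only [Set.mem_iUnion]
    have fin : (∀ j, j ≠ i → a j = q j) →
        ∃ b, ∃ _ : b ∈ A \ {v, u} ∪ {q, t}, x ∈ box f b := by
      intro haq
      rcases box_sub_twin hf hqt haq hx with h | h
      · exact ⟨q, by simp, h⟩
      · exact ⟨t, by simp, h⟩
    rcases key a ha with rfl | rfl | h
    · exact fin fun j hj => (hq j hj).symm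
    · exact fin fun j hj => by rw [hq j hj, hvu.2 j hj]
    · exact ⟨a, Finset.mem_union_left _ h, hx⟩
  · intro b hb X f hf x hx
    simp only [Set.mem_iUnion]
    have fin : (∀ j, j ≠ i → b j = v j) → ∃ a, ∃ _ : a ∈ A, x ∈ box f a := by
      intro hbv
      rcases box_sub_twin hf hvu hbv hx with h | h
      · exact ⟨v, hv, h⟩
      · exact ⟨u, hu, h⟩
    simp only [Finset.mem_union, Finset.mem_sdiff, Finset.mem_insert,
      Finset.mem_singleton] at hb
    rcases hb with hb | rfl | rfl
    · exact ⟨b, hb.1, hx⟩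
    · exact fin hq
    · exact fin fun j hj => by rw [← hqt.2 j hj, hq j hj]

theorem GCStep.isCode_card (hc : ∀ s, c (c s) = s) (hc' : ∀ s, c s ≠ s)
    {A B : Finset (Fin d → S)} (h : GCStep c A B) (hA : IsCode c A) :
    IsCode c B ∧ B.card = A.card := by
  obtain ⟨v, u, q, t, i, hv, hu, hvu, hqt, hq, rfl⟩ := h
  have ht : ∀ j, j ≠ i → t j = v j := fun j hj => by rw [← hqt.2 j hj, hq j hj]
  have hvu_ne : v ≠ u := by
    rintro rfl
    exact hc' _ hvu.1.symm
  have hqt_ne : q ≠ t := by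
    rintro rfl
    exact hc' _ hqt.1.symm
  have hD : ∀ x ∈ A \ {v, u}, Dich c x q ∧ Dich c x t := by
    intro x hx
    simp only [Finset.mem_sdiff, Finset.mem_insert, Finset.mem_singleton, not_or] at hx
    have h1 := hA x hx.1 v hv hx.2.1
    have h2 := hA x hx.1 u hu hx.2.2
    exact ⟨dich_of_twin hc hc' hvu hq h1 h2, dich_of_twin hc hc' hvu ht h1 h2⟩
  constructor
  · have hqt' : Dich c q t := ⟨i, hqt.1⟩
    intro x hx y hy hxy
    rw [Finset.mem_union, Finset.mem_insert, Finset.mem_singleton] at hx hy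
    rcases hx with hx | rfl | rfl <;> rcases hy with hy | rfl | rfl
    · exact hA x (Finset.mem_sdiff.1 hx).1 y (Finset.mem_sdiff.1 hy).1 hxy
    · exact (hD x hx).1
    · exact (hD x hx).2
    · exact (hD y hy).1.symm_of hc
    · exact absurd rfl hxy
    · exact hqt'
    · exact (hD y hy).2.symm_of hc
    · exact hqt'.symm_of hc
    · exact absurd rfl hxy
  · rw [Finset.card_union_of_disjoint, Finset.card_sdiff_of_subset,
      Finset.card_pair hvu_ne, Finset.card_pair hqt_ne]
    · have : ({v, u} : Finset (Fin d → S)).card ≤ A.card :=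
        Finset.card_le_card (by simp [Finset.insert_subset_iff, hv, hu])
      rw [Finset.card_pair hvu_ne] at this
      omega
    · simp [Finset.insert_subset_iff, hv, hu]
    · rw [Finset.disjoint_left]
      intro x hx hx'
      rw [Finset.mem_insert, Finset.mem_singleton] at hx'
      rcases hx' with rfl | rfl
      · exact Dich.irrefl hc' (hD _ hx).1
      · exact Dich.irrefl hc' (hD _ hx).2

theorem GC.props (hc : ∀ s, c (c s) = s) (hc' : ∀ s, c s ≠ s)
    {A B : Finset (Fin d → S)} (h : GC c A B) (hA : IsCode c A) :
    IsCode c B ∧ B.card = A.card ∧ Covered c A B ∧ Covered c B A := by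
  unfold GC at h
  induction h with
  | refl =>
    have : Covered c A A := by
      intro v hv X f hf x hx
      simp only [Set.mem_iUnion]
      exact ⟨v, hv, hx⟩
    exact ⟨hA, rfl, this, this⟩
  | tail _ hs ih =>
    obtain ⟨h1, h2, h3, h4⟩ := ih
    obtain ⟨k1, k2⟩ := hs.isCode_card hc hc' h1
    exact ⟨k1, k2.trans h2, h3.trans hs.covered.1, hs.covered.2.trans h4⟩

/-- Adding a word dichotomous to the whole code is compatible with gluing and cutting. -/
theorem GC.insert_word (hc : ∀ s, c (c s) = s) (hc' : ∀ s, c s ≠ s)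
    {A B : Finset (Fin d → S)} (h : GC c A B) {w : Fin d → S}
    (hw : ∀ a ∈ A, Dich c w a) :
    GC c (insert w A) (insert w B) ∧ ∀ b ∈ B, Dich c w b := by
  unfold GC at h
  induction h with
  | refl => exact ⟨Relation.ReflTransGen.refl, hw⟩
  | tail _ hs ih =>
    refine ⟨ih.1.tail ?_, hs.dich hc hc' ih.2⟩
    have hD := ih.2
    obtain ⟨v, u, q, t, i, hv, hu, hvu, hqt, hq, rfl⟩ := hs
    refine ⟨v, u, q, t, i, Finset.mem_insert_of_mem hv, Finset.mem_insert_of_mem hu,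
      hvu, hqt, hq, ?_⟩
    have h1 : w ≠ v := by
      rintro rfl
      exact Dich.irrefl hc' (hD _ hv)
    have h2 : w ≠ u := by
      rintro rfl
      exact Dich.irrefl hc' (hD _ hu)
    rw [Finset.insert_sdiff_of_notMem _ (by simp [h1, h2]), Finset.insert_union]

theorem covered_erase {A B : Finset (Fin d → S)} (hA : IsCode c A)
    (h : Covered c A B) {w : Fin d → S} (hwA : w ∈ A) :
    Covered c (A.erase w) (B.erase w) := by
  intro v hv X f hf x hx
  rw [Finset.mem_erase] at hv
  have := h v hv.2 X f hf hx
  simp only [Set.mem_iUnion] at this ⊢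
  obtain ⟨b, hb, hxb⟩ := this
  refine ⟨b, Finset.mem_erase.2 ⟨?_, hb⟩, hxb⟩
  rintro rfl
  exact box_disjoint hf (hA v hv.2 b hwA hv.1) hx hxb

theorem IsCode.erase_word {A : Finset (Fin d → S)} (hA : IsCode c A) (w : Fin d → S) :
    IsCode c (A.erase w) := fun x hx y hy =>
  hA x (Finset.mem_of_mem_erase hx) y (Finset.mem_of_mem_erase hy)

end Helpers

/-- Lemma "ind" of the paper. -/
theorem strongly_equivalent_of_common_word
    {S : Type} [Fintype S] [DecidableEq S] (c : S → S)
    (hc : ∀ s, c (c s) = s) (hc' : ∀ s, c s ≠ s) {d : ℕ} (n : ℕ)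
    (V W : Finset (Fin d → S)) (hV : IsCode c V) (hW : IsCode c W)
    (heq : Equivalent c V W) (hVn : V.card = n) (hWn : W.card = n)
    (hind : ∀ V' W' : Finset (Fin d → S), IsCode c V' → IsCode c W' →
      Equivalent c V' W' → V'.card = n - 1 → W'.card = n - 1 → GC c V' W')
    (hex : ∃ w ∈ W, ∃ V' : Finset (Fin d → S), GC c V V' ∧ w ∈ V') :
    GC c V W := by
  obtain ⟨w, hwW, U, hVU, hwU⟩ := hex
  obtain ⟨hU, hUc, hVU1, hVU2⟩ := GC.props hc hc' hVU hV
  have h1 : GC c (U.erase w) (W.erase w) := by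
    refine hind _ _ (hU.erase_word w) (hW.erase_word w)
      ⟨covered_erase hU (hVU2.trans heq.1) hwU, covered_erase hW (heq.2.trans hVU1) hwW⟩ ?_ ?_
    · rw [Finset.card_erase_of_mem hwU, hUc, hVn]
    · rw [Finset.card_erase_of_mem hwW, hWn]
  have h2 := (GC.insert_word hc hc' h1 (w := w) (fun a ha =>
    hU w hwU a (Finset.mem_of_mem_erase ha) (Finset.ne_of_mem_erase ha).symm)).1
  rw [Finset.insert_erase hwU, Finset.insert_erase hwW] at h2
  exact Relation.ReflTransGen.trans hVU h2

end PolyboxPaper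
end

section
/- If V, W ⊆ S^d are equivalent polybox codes, then β(V) = β(W) for every map b : S → {0,1} satisfying b(s) + b(s') = 1 for all s ∈ S. -/
/- Common framework: polybox codes over a finite alphabet `S` with a
complementation `c : S → S` (an involution without fixed points). -/

namespace PolyboxPaper

variable {S : Type} [Fintype S] [DecidableEq S] {d : ℕ}

theorem covered_image_subset
    {S : Type} [Fintype S] [DecidableEq S] (c : S → S) {d : ℕ}
    (V W : Finset (Fin d → S)) (h : Covered c V W)
    (b : S → ℕ) (hb : ∀ s, b s + b (c s) = 1) :
    V.image (fun v (i : Fin d) => b (v i)) ⊆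
      W.image (fun v (i : Fin d) => b (v i)) := by
  intro t ht
  obtain ⟨v, hv, rfl⟩ := Finset.mem_image.1 ht
  have hr : IsRealization c (fun _ : Fin d => Bool)
      (fun _ s => {x | x = decide (b s = 1)}) := by
    intro i s
    refine ⟨⟨_, rfl⟩, ?_, ?_⟩
    · intro he
      have : (!decide (b s = 1)) ∈ ({x | x = decide (b s = 1)} : Set Bool) := by
        exact (Set.ext_iff.1 he _).2 (Set.mem_univ _)
      simp at this
    · ext x
      have := hb s
      have h2 : (b s = 0 ∧ b (c s) = 1) ∨ (b s = 1 ∧ b (c s) = 0) := by omega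
      rcases h2 with ⟨h1, h2⟩ | ⟨h1, h2⟩ <;> cases x <;> simp [h1, h2]
  have hx := h v hv _ _ hr
    (show (fun i => decide (b (v i) = 1)) ∈ box _ v from fun i => rfl)
  simp only [Set.mem_iUnion] at hx
  obtain ⟨w, hw, hx⟩ := hx
  refine Finset.mem_image.2 ⟨w, hw, ?_⟩
  funext i
  have h1 : decide (b (v i) = 1) = decide (b (w i) = 1) := hx i
  have h2 := hb (v i)
  have h3 := hb (w i)
  rw [decide_eq_decide] at h1
  show b (w i) = b (v i)
  omega

/-- Lemma "index" of the paper: equivalent codes have the same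
binary code. -/
theorem equivalent_codes_same_binary_code
    {S : Type} [Fintype S] [DecidableEq S] (c : S → S)
    (hc : ∀ s, c (c s) = s) (hc' : ∀ s, c s ≠ s) {d : ℕ}
    (V W : Finset (Fin d → S)) (hV : IsCode c V) (hW : IsCode c W)
    (heq : Equivalent c V W)
    (b : S → ℕ) (hb : ∀ s, b s + b (c s) = 1) :
    V.image (fun v (i : Fin d) => b (v i)) =
      W.image (fun v (i : Fin d) => b (v i)) := by
  exact Finset.Subset.antisymm (covered_image_subset c V W heq.1 b hb)
    (covered_image_subset c W V heq.2 b hb)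

end PolyboxPaper
end
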